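/- arXiv:2007.16134 — 2 statements merged into one kernel-verified Lean document; each statement's English description precedes it below -/
import Mathlib

section
/- For all α ∈ (0,1) and all z ≥ 0, the Mittag-Leffler function satisfies 1/(1 + Γ(1-α)·z) ≤ E_{α,1}(-z) ≤ 1/(1 + z/Γ(1+α)). -/
/-- The one-parameter Mittag-Leffler function `E_{α,1}(z) = ∑_{k=0}^∞ z^k / Γ(kα+1)`
(real argument). -/
noncomputable def mittagLeffler (α z : ℝ) : ℝ :=
  ∑' k : ℕ, z ^ k / Real.Gamma (k * α + 1)

/-!
For `z ≥ 0` put `x t = E_{α,1}(-z t^α)` and `y t = t^(α-1) E_{α,α}(-z t^α)`. Termwise fractional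
integration gives `x = 1 - z ∫ y`, `x = I^{1-α} y` and `x = 1 - z I^α x`. The function
`E_{α,α}(-z t^α)` solves a Volterra equation whose kernel decreases in its outer variable, and a
first-zero argument shows that it is positive; so `y > 0` and `x` is decreasing. At `t = 1`,
bounding the kernel of `I^{1-α}` from below by its value at distance `1` yields
`x ≥ (∫ y) / Γ(1-α)`, the lower bound, and bounding `x` from below by its final value yields
`I^α x ≥ x / Γ(1+α)`, the upper bound.
-/

open Filter MeasureTheory Set Topology

section Volterra

variable {f : ℝ → ℝ}

lemma exists_first_nonpos (hf : ContinuousOn f (Ici 0)) (hf0 : 0 < f 0) {T : ℝ} (hT : 0 ≤ T)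
    (hfT : f T ≤ 0) : ∃ t, 0 < t ∧ f t ≤ 0 ∧ ∀ s, 0 ≤ s → s < t → 0 < f s := by
  have hclosed : IsClosed (Icc 0 T ∩ f ⁻¹' Iic 0) :=
    (hf.mono Icc_subset_Ici_self).preimage_isClosed_of_isClosed isClosed_Icc isClosed_Iic
  obtain ⟨t, ⟨⟨ht, htT⟩, hft⟩, hleast⟩ :=
    (isCompact_Icc.of_isClosed_subset hclosed inter_subset_left).exists_isLeast
      ⟨T, ⟨hT, le_rfl⟩, hfT⟩
  refine ⟨t, ht.lt_of_ne (by rintro rfl; exact hf0.not_ge hft), hft, fun s hs hst => ?_⟩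
  by_contra! hfs
  exact hst.not_ge (hleast ⟨⟨hs, hst.le.trans htT⟩, hfs⟩)

lemma exists_integral_tail_lt {g : ℝ → ℝ} {a b ε : ℝ} (hab : a < b)
    (hg : IntervalIntegrable g volume a b) (hε : 0 < ε) :
    ∃ c ∈ Ioo a b, ∀ t ∈ Ico c b, ∫ s in t..b, g s < ε := by
  have hcont : ContinuousWithinAt (fun t => ∫ s in b..t, g s) (uIcc a b) b :=
    intervalIntegral.continuousOn_primitive_interval' hg right_mem_uIcc b right_mem_uIcc
  have htail : Tendsto (fun t => ∫ s in t..b, g s) (𝓝[<] b) (𝓝 0) := by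
    have h := hcont.tendsto.neg
    simp only [← intervalIntegral.integral_symm, intervalIntegral.integral_same, neg_zero] at h
    refine h.mono_left ?_
    rw [uIcc_of_le hab.le, ← nhdsWithin_Ioo_eq_nhdsLT hab]
    exact nhdsWithin_mono b Ioo_subset_Icc_self
  obtain ⟨c, hc, hsub⟩ := (mem_nhdsLT_iff_exists_mem_Ico_Ioo_subset hab).1
    (htail.eventually_lt_const hε)
  obtain ⟨d, hcd, hdb⟩ := exists_between hc.2
  exact ⟨d, ⟨hc.1.trans_lt hcd, hdb⟩, fun t ht => hsub ⟨hcd.trans_le ht.1, ht.2⟩⟩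

/- Compare the equation at a first zero `t₀` with the equation at the point `t` where `f` is
maximal on a short interval `[a, t₀]`: the contribution of `(t, t₀)` is too small to bring `f`
down from `f t > 0` to `0`. -/
theorem pos_of_monotoneOn_add_integral {K : ℝ → ℝ → ℝ} (hf : ContinuousOn f (Ici 0))
    (hf0 : 0 < f 0) (hK : ∀ t, 0 < t → IntervalIntegrable (K t) volume 0 t)
    (hK_nonneg : ∀ t s, 0 < s → s < t → 0 ≤ K t s)
    (hK_anti : ∀ s, 0 < s → AntitoneOn (fun t => K t s) (Ioi s))
    (hmono : MonotoneOn (fun t => f t + ∫ s in 0..t, K t s * f s) (Ioi 0)) {T : ℝ}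
    (hT : 0 ≤ T) : 0 < f T := by
  by_contra! hfT
  obtain ⟨t₀, ht₀, hft₀, hpos⟩ := exists_first_nonpos hf hf0 hT hfT
  obtain ⟨a, ⟨ha, hat₀⟩, htail⟩ := exists_integral_tail_lt ht₀ (hK t₀ ht₀) one_pos
  obtain ⟨t, ht_mem, ht_max⟩ := isCompact_Icc.exists_isMaxOn (nonempty_Icc.2 hat₀.le)
    (hf.mono fun s hs => ha.le.trans hs.1)
  have hft : 0 < f t := (hpos a ha.le hat₀).trans_le (ht_max (left_mem_Icc.2 hat₀.le))
  have htt₀ : t < t₀ := ht_mem.2.lt_of_ne (by rintro rfl; exact hft.not_ge hft₀)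
  have ht : 0 < t := ha.trans_le ht_mem.1
  have hint : ∀ u, 0 < u → IntervalIntegrable (fun s => K u s * f s) volume 0 u := fun u hu =>
    (hK u hu).mul_continuousOn (hf.mono (by rw [uIcc_of_le hu.le]; exact Icc_subset_Ici_self))
  have ht_uIcc : t ∈ uIcc 0 t₀ := by rw [uIcc_of_le ht₀.le]; exact ⟨ht.le, htt₀.le⟩
  have hint_head := (hint t₀ ht₀).mono_set (uIcc_subset_uIcc_left ht_uIcc)
  have hint_tail := (hint t₀ ht₀).mono_set (uIcc_subset_uIcc_right ht_uIcc)
  have hhead : ∫ s in 0..t, K t₀ s * f s ≤ ∫ s in 0..t, K t s * f s := by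
    refine intervalIntegral.integral_mono_on_of_le_Ioo ht.le hint_head (hint t ht) fun s hs => ?_
    exact mul_le_mul_of_nonneg_right (hK_anti s hs.1 hs.2 (hs.2.trans htt₀) htt₀.le)
      (hpos s hs.1.le (hs.2.trans htt₀)).le
  have htail_le : ∫ s in t..t₀, K t₀ s * f s ≤ (∫ s in t..t₀, K t₀ s) * f t := by
    rw [← intervalIntegral.integral_mul_const]
    refine intervalIntegral.integral_mono_on_of_le_Ioo htt₀.le hint_tail
      (((hK t₀ ht₀).mono_set (uIcc_subset_uIcc_right ht_uIcc)).mul_const _) fun s hs => ?_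
    exact mul_le_mul_of_nonneg_left (ht_max ⟨ht_mem.1.trans hs.1.le, hs.2.le⟩)
      (hK_nonneg t₀ s (ht.trans hs.1) hs.2)
  have hlt : (∫ s in t..t₀, K t₀ s) * f t < 1 * f t :=
    mul_lt_mul_of_pos_right (htail t ⟨ht_mem.1, htt₀⟩) hft
  have hle : f t + ∫ s in 0..t, K t s * f s ≤ f t₀ + ∫ s in 0..t₀, K t₀ s * f s :=
    hmono ht ht₀ htt₀.le
  rw [← intervalIntegral.integral_add_adjacent_intervals hint_head hint_tail] at hle
  linarith

end Volterra

section GammaRatio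

/- Log-convexity of `Γ`, with `log Γ(x) - log Γ(x - 1) = log (x - 1)`. -/
lemma rpow_mul_Gamma_le_Gamma_add {x a : ℝ} (hx : 1 < x) (ha : 0 < a) :
    (x - 1) ^ a * Real.Gamma x ≤ Real.Gamma (x + a) := by
  have hx1 : 0 < x - 1 := sub_pos.2 hx
  have hΓ : 0 < Real.Gamma (x - 1) := Real.Gamma_pos_of_pos hx1
  have hΓx : 0 < Real.Gamma x := Real.Gamma_pos_of_pos (by linarith)
  have hΓxa : 0 < Real.Gamma (x + a) := Real.Gamma_pos_of_pos (by linarith)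
  have hlog : Real.log (Real.Gamma x) - Real.log (Real.Gamma (x - 1)) = Real.log (x - 1) := by
    rw [sub_eq_iff_eq_add, ← Real.log_mul hx1.ne' hΓ.ne', ← Real.Gamma_add_one hx1.ne',
      sub_add_cancel]
  have hslope := Real.convexOn_log_Gamma.slope_mono_adjacent (x := x - 1) (y := x) (z := x + a)
    hx1 (mem_Ioi.2 (by linarith)) (by linarith) (by linarith)
  rw [Function.comp_apply, Function.comp_apply, Function.comp_apply, sub_sub_cancel, div_one,
    add_sub_cancel_left, hlog, le_div_iff₀ ha] at hslope
  rw [← Real.log_le_log_iff (by positivity) hΓxa, Real.log_mul (by positivity) hΓx.ne',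
    Real.log_rpow hx1]
  linarith

lemma tendsto_Gamma_div_Gamma_add {a : ℝ} (ha : 0 < a) :
    Tendsto (fun x => Real.Gamma x / Real.Gamma (x + a)) atTop (𝓝 0) := by
  have hlim : Tendsto (fun x : ℝ => (x - 1) ^ (-a)) atTop (𝓝 0) :=
    (tendsto_rpow_neg_atTop ha).comp (tendsto_atTop_add_const_right _ (-1) tendsto_id)
  refine squeeze_zero' ?_ ?_ hlim
  · filter_upwards [eventually_gt_atTop 0] with x hx
    exact div_nonneg (Real.Gamma_nonneg_of_nonneg hx.le)
      (Real.Gamma_nonneg_of_nonneg (by positivity))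
  · filter_upwards [eventually_gt_atTop 1] with x hx
    have hx1 : 0 < x - 1 := sub_pos.2 hx
    rw [div_le_iff₀ (Real.Gamma_pos_of_pos (by positivity)), Real.rpow_neg hx1.le,
      le_inv_mul_iff₀ (by positivity)]
    exact rpow_mul_Gamma_le_Gamma_add hx ha

end GammaRatio

/-- The two-parameter Mittag-Leffler function `E_{α,β}(z) = ∑ z^k / Γ(kα+β)`; the case `β = 1` is
`mittagLeffler`. -/
noncomputable def mittagLeffler₂ (α β z : ℝ) : ℝ :=
  ∑' k : ℕ, z ^ k / Real.Gamma (k * α + β)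

section MittagLeffler₂

variable {α β : ℝ}

lemma summable_mittagLeffler₂ (hα : 0 < α) (hβ : 0 < β) (z : ℝ) :
    Summable fun k : ℕ => z ^ k / Real.Gamma (k * α + β) := by
  rcases eq_or_ne z 0 with rfl | hz
  · exact summable_of_ne_finset_zero (s := {0}) fun k hk => by simp_all
  have hΓ : ∀ k : ℕ, 0 < Real.Gamma (k * α + β) := fun k => Real.Gamma_pos_of_pos (by positivity)
  have harg : Tendsto (fun k : ℕ => k * α + β) atTop atTop :=
    tendsto_atTop_add_const_right _ _ (tendsto_natCast_atTop_atTop.atTop_mul_const hα)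
  have hratio := ((tendsto_Gamma_div_Gamma_add hα).comp harg).const_mul |z|
  rw [mul_zero] at hratio
  refine summable_of_ratio_test_tendsto_lt_one one_pos
    (.of_forall fun k => div_ne_zero (pow_ne_zero k hz) (hΓ k).ne') (hratio.congr fun k => ?_)
  have hsucc : ((k + 1 : ℕ) : ℝ) * α + β = k * α + β + α := by push_cast; ring
  have hΓ' := hΓ (k + 1)
  rw [hsucc] at hΓ'
  have := hΓ k
  rw [hsucc, pow_succ']
  simp only [Function.comp_apply, norm_div, norm_mul, norm_pow, Real.norm_eq_abs,
    abs_of_pos (hΓ k), abs_of_pos hΓ']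
  field_simp

lemma continuous_mittagLeffler₂ (hα : 0 < α) (hβ : 0 < β) : Continuous (mittagLeffler₂ α β) := by
  refine continuous_iff_continuousAt.2 fun z => ?_
  have hball : ContinuousOn (mittagLeffler₂ α β) (Metric.ball 0 (|z| + 1)) := by
    refine continuousOn_tsum (fun k => by fun_prop) (summable_mittagLeffler₂ hα hβ (|z| + 1))
      fun k w hw => ?_
    have hΓ : 0 < Real.Gamma (k * α + β) := Real.Gamma_pos_of_pos (by positivity)
    rw [norm_div, norm_pow, Real.norm_of_nonneg hΓ.le]
    gcongr
    exact (mem_ball_zero_iff.1 hw).le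
  exact hball.continuousAt (Metric.isOpen_ball.mem_nhds (by simp))

lemma mittagLeffler₂_eq_add (hα : 0 < α) (hβ : 0 < β) (z : ℝ) :
    mittagLeffler₂ α β z = 1 / Real.Gamma β + z * mittagLeffler₂ α (α + β) z := by
  unfold mittagLeffler₂
  rw [(summable_mittagLeffler₂ hα hβ z).tsum_eq_zero_add, ← tsum_mul_left]
  congr 1
  · simp
  · refine tsum_congr fun k => ?_
    rw [show ((k + 1 : ℕ) : ℝ) * α + β = k * α + (α + β) by push_cast; ring]
    ring

end MittagLeffler₂

/-- The power function `t^(a-1) / Γ(a)`, the convolution kernel of fractional integration of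
order `a`. -/
noncomputable def powerKernel (a t : ℝ) : ℝ :=
  t ^ (a - 1) / Real.Gamma a

section PowerKernel

variable {a b t : ℝ}

lemma powerKernel_nonneg (ha : 0 < a) (ht : 0 ≤ t) : 0 ≤ powerKernel a t :=
  div_nonneg (Real.rpow_nonneg ht _) (Real.Gamma_pos_of_pos ha).le

lemma powerKernel_pos (ha : 0 < a) (ht : 0 < t) : 0 < powerKernel a t :=
  div_pos (Real.rpow_pos_of_pos ht _) (Real.Gamma_pos_of_pos ha)

@[simp]
lemma powerKernel_one_left (t : ℝ) : powerKernel 1 t = 1 := by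
  simp [powerKernel]

@[simp]
lemma powerKernel_one_right (a : ℝ) : powerKernel a 1 = 1 / Real.Gamma a := by
  simp [powerKernel]

lemma antitoneOn_powerKernel (ha : 0 < a) (ha1 : a ≤ 1) : AntitoneOn (powerKernel a) (Ioi 0) :=
  fun _ hs _ _ hst => div_le_div_of_nonneg_right
    (Real.rpow_le_rpow_of_nonpos hs hst (by linarith)) (Real.Gamma_pos_of_pos ha).le

lemma integral_powerKernel_mul_powerKernel (ha : 0 < a) (hb : 0 < b) (ht : 0 < t) :
    ∫ s in 0..t, powerKernel a (t - s) * powerKernel b s = powerKernel (a + b) t := by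
  have hΓa : (Real.Gamma a : ℂ) ≠ 0 := by exact_mod_cast (Real.Gamma_pos_of_pos ha).ne'
  have hΓb : (Real.Gamma b : ℂ) ≠ 0 := by exact_mod_cast (Real.Gamma_pos_of_pos hb).ne'
  have hbeta := Complex.betaIntegral_scaled (b : ℂ) (a : ℂ) ht
  rw [Complex.betaIntegral_eq_Gamma_mul_div _ _ (by simpa) (by simpa), ← Complex.ofReal_add,
    Complex.Gamma_ofReal, Complex.Gamma_ofReal, Complex.Gamma_ofReal] at hbeta
  apply Complex.ofReal_injective
  rw [← intervalIntegral.integral_ofReal]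
  calc ∫ s in 0..t, ((powerKernel a (t - s) * powerKernel b s : ℝ) : ℂ)
      = ∫ s in 0..t, (s : ℂ) ^ ((b : ℂ) - 1) * ((t : ℂ) - s) ^ ((a : ℂ) - 1) /
          (Real.Gamma a * Real.Gamma b) := by
        refine intervalIntegral.integral_congr fun s hs => ?_
        rw [uIcc_of_le ht.le] at hs
        simp only [powerKernel]
        push_cast [Complex.ofReal_cpow hs.1, Complex.ofReal_cpow (sub_nonneg.2 hs.2)]
        field_simp
    _ = (powerKernel (a + b) t : ℂ) := by
        rw [intervalIntegral.integral_div, hbeta, powerKernel, add_comm a b]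
        push_cast [Complex.ofReal_cpow ht.le]
        field_simp

lemma intervalIntegrable_powerKernel_mul_powerKernel (ha : 0 < a) (hb : 0 < b) (ht : 0 < t) :
    IntervalIntegrable (fun s => powerKernel a (t - s) * powerKernel b s) volume 0 t := by
  apply intervalIntegral.intervalIntegrable_of_integral_ne_zero
  rw [integral_powerKernel_mul_powerKernel ha hb ht]
  exact (powerKernel_pos (add_pos ha hb) ht).ne'

end PowerKernel

/-- The Riemann–Liouville fractional integral of order `γ` based at `0`. -/
noncomputable def riemannLiouville (γ : ℝ) (f : ℝ → ℝ) (t : ℝ) : ℝ :=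
  ∫ s in 0..t, powerKernel γ (t - s) * f s

section RiemannLiouville

variable {γ t : ℝ} {f : ℝ → ℝ}

@[simp]
lemma riemannLiouville_one (f : ℝ → ℝ) (t : ℝ) : riemannLiouville 1 f t = ∫ s in 0..t, f s := by
  simp [riemannLiouville]

lemma powerKernel_mul_integral_le_riemannLiouville (hγ : 0 < γ) (hγ1 : γ ≤ 1) (ht : 0 < t)
    (hf : IntervalIntegrable f volume 0 t)
    (hγf : IntervalIntegrable (fun s => powerKernel γ (t - s) * f s) volume 0 t)
    (hf_nonneg : ∀ s ∈ Ioo 0 t, 0 ≤ f s) :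
    powerKernel γ t * ∫ s in 0..t, f s ≤ riemannLiouville γ f t := by
  rw [← intervalIntegral.integral_const_mul]
  refine intervalIntegral.integral_mono_on_of_le_Ioo ht.le (hf.const_mul _) hγf fun s hs => ?_
  exact mul_le_mul_of_nonneg_right (antitoneOn_powerKernel hγ hγ1 (sub_pos.2 hs.2) ht
    (sub_le_self t hs.1.le)) (hf_nonneg s hs)

lemma powerKernel_add_one_mul_le_riemannLiouville {m : ℝ} (hγ : 0 < γ) (ht : 0 < t)
    (hγf : IntervalIntegrable (fun s => powerKernel γ (t - s) * f s) volume 0 t)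
    (hm : ∀ s ∈ Ioo 0 t, m ≤ f s) :
    powerKernel (γ + 1) t * m ≤ riemannLiouville γ f t := by
  have hint := intervalIntegrable_powerKernel_mul_powerKernel hγ one_pos ht
  rw [← integral_powerKernel_mul_powerKernel hγ one_pos ht,
    ← intervalIntegral.integral_mul_const]
  refine intervalIntegral.integral_mono_on_of_le_Ioo ht.le (hint.mul_const m) hγf fun s hs => ?_
  rw [powerKernel_one_left, mul_one]
  exact mul_le_mul_of_nonneg_left (hm s hs) (powerKernel_nonneg hγ (sub_nonneg.2 hs.2.le))

end RiemannLiouville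

/-- The function `t^(β-1) E_{α,β}(c t^α)`, which for `β = α` and `β = 1` is the impulse response and
the solution with initial value `1` of the fractional relaxation equation `D^α u = c u`. -/
noncomputable def mittagLefflerKernel (α β c t : ℝ) : ℝ :=
  t ^ (β - 1) * mittagLeffler₂ α β (c * t ^ α)

section MittagLefflerKernel

variable {α β γ t : ℝ}

@[simp]
lemma mittagLefflerKernel_apply_one (α β c : ℝ) :
    mittagLefflerKernel α β c 1 = mittagLeffler₂ α β c := by
  simp [mittagLefflerKernel]

lemma hasSum_mittagLefflerKernel (hα : 0 < α) (hβ : 0 < β) (c : ℝ) (ht : 0 < t) :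
    HasSum (fun k : ℕ => c ^ k * powerKernel (k * α + β) t) (mittagLefflerKernel α β c t) := by
  refine ((summable_mittagLeffler₂ hα hβ (c * t ^ α)).hasSum.mul_left (t ^ (β - 1))).congr_fun
    fun k => ?_
  have hpow : t ^ (k * α + β - 1) = (t ^ α) ^ k * t ^ (β - 1) := by
    rw [← Real.rpow_mul_natCast ht.le, ← Real.rpow_add ht]
    ring_nf
  rw [powerKernel, hpow, mul_pow]
  ring

lemma mittagLefflerKernel_eq_add (hα : 0 < α) (hβ : 0 < β) (c : ℝ) (ht : 0 < t) :
    mittagLefflerKernel α β c t =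
      powerKernel β t + c * mittagLefflerKernel α (α + β) c t := by
  have hpow : t ^ (α + β - 1) = t ^ α * t ^ (β - 1) := by rw [← Real.rpow_add ht]; ring_nf
  rw [mittagLefflerKernel, mittagLefflerKernel, mittagLeffler₂_eq_add hα hβ, powerKernel, hpow]
  ring

lemma intervalIntegrable_powerKernel_mul_mittagLefflerKernel (hα : 0 < α) (hβ : 0 < β)
    (hγ : 0 < γ) (c : ℝ) (ht : 0 < t) :
    IntervalIntegrable (fun s => powerKernel γ (t - s) * mittagLefflerKernel α β c s)
      volume 0 t := by
  have hcont : Continuous fun s : ℝ => Real.Gamma β * mittagLeffler₂ α β (c * s ^ α) :=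
    ((continuous_mittagLeffler₂ hα hβ).comp
      ((Real.continuous_rpow_const hα.le).const_mul c)).const_mul _
  refine ((intervalIntegrable_powerKernel_mul_powerKernel hγ hβ ht).mul_continuousOn
    hcont.continuousOn).congr fun s _ => ?_
  have := (Real.Gamma_pos_of_pos hβ).ne'
  simp only [mittagLefflerKernel, powerKernel]
  field_simp

lemma intervalIntegrable_mittagLefflerKernel (hα : 0 < α) (hβ : 0 < β) (c : ℝ) (ht : 0 < t) :
    IntervalIntegrable (mittagLefflerKernel α β c) volume 0 t := by
  simpa only [powerKernel_one_left, one_mul] using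
    intervalIntegrable_powerKernel_mul_mittagLefflerKernel hα hβ one_pos c ht

theorem riemannLiouville_mittagLefflerKernel (hα : 0 < α) (hβ : 0 < β) (hγ : 0 < γ) (c : ℝ)
    (ht : 0 < t) : riemannLiouville γ (mittagLefflerKernel α β c) t =
      mittagLefflerKernel α (γ + β) c t := by
  let F : ℕ → ℝ → ℝ := fun k s =>
    c ^ k * (powerKernel γ (t - s) * powerKernel (k * α + β) s)
  have hbase : ∀ k : ℕ, 0 < k * α + β := fun k => by positivity
  have hF_int : ∀ k, Integrable (F k) (volume.restrict (Ioc 0 t)) := fun k =>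
    ((intervalIntegrable_powerKernel_mul_powerKernel hγ (hbase k) ht).1).const_mul _
  have hbeta : ∀ k : ℕ, ∫ s in Ioc 0 t, powerKernel γ (t - s) * powerKernel (k * α + β) s =
      powerKernel (k * α + (γ + β)) t := fun k => by
    rw [← intervalIntegral.integral_of_le ht.le,
      integral_powerKernel_mul_powerKernel hγ (hbase k) ht, add_left_comm]
  have hF : ∀ k, ∫ s in Ioc 0 t, F k s = c ^ k * powerKernel (k * α + (γ + β)) t := fun k => by
    rw [integral_const_mul, hbeta]
  have hF_norm : ∀ k, ∫ s in Ioc 0 t, ‖F k s‖ =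
      |c| ^ k * powerKernel (k * α + (γ + β)) t := fun k => by
    rw [← hbeta, ← integral_const_mul]
    refine setIntegral_congr_fun measurableSet_Ioc fun s hs => ?_
    have hnonneg := mul_nonneg (powerKernel_nonneg hγ (sub_nonneg.2 hs.2))
      (powerKernel_nonneg (hbase k) hs.1.le)
    simp only [F, norm_mul (c ^ k), norm_pow, Real.norm_eq_abs c, Real.norm_of_nonneg hnonneg]
  have hsum := hasSum_integral_of_summable_integral_norm hF_int (by
    simpa only [hF_norm] using
      (hasSum_mittagLefflerKernel hα (add_pos hγ hβ) |c| ht).summable)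
  simp only [hF] at hsum
  rw [(hasSum_mittagLefflerKernel hα (add_pos hγ hβ) c ht).unique hsum, riemannLiouville,
    intervalIntegral.integral_of_le ht.le]
  refine setIntegral_congr_fun measurableSet_Ioc fun s hs => ?_
  have hterm := (hasSum_mittagLefflerKernel hα hβ c hs.1).mul_left (powerKernel γ (t - s))
  simp only [← hterm.tsum_eq, F, mul_left_comm]

lemma mittagLefflerKernel_eq_add_riemannLiouville (hα : 0 < α) (hβ : 0 < β) (c : ℝ)
    (ht : 0 < t) : mittagLefflerKernel α β c t =
      powerKernel β t + c * riemannLiouville α (mittagLefflerKernel α β c) t := by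
  rw [riemannLiouville_mittagLefflerKernel hα hβ hα c ht, ← mittagLefflerKernel_eq_add hα hβ c ht]

lemma mittagLefflerKernel_one_eq_one_add_integral (hα : 0 < α) (c : ℝ) (ht : 0 < t) :
    mittagLefflerKernel α 1 c t = 1 + c * ∫ s in 0..t, mittagLefflerKernel α α c s := by
  rw [← riemannLiouville_one, riemannLiouville_mittagLefflerKernel hα hα one_pos c ht,
    mittagLefflerKernel_eq_add hα one_pos c ht, powerKernel_one_left, add_comm 1 α]

end MittagLefflerKernel

section Relaxation

variable {α : ℝ}

lemma antitoneOn_rpow_mul_powerKernel_sub (hα : 0 < α) (hα1 : α ≤ 1) {s : ℝ} (hs : 0 ≤ s) :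
    AntitoneOn (fun t => t ^ (1 - α) * powerKernel α (t - s)) (Ioi s) := by
  have hquot : ∀ t ∈ Ioi s, t ^ (1 - α) * powerKernel α (t - s) =
      (t / (t - s)) ^ (1 - α) / Real.Gamma α := fun t ht => by
    rw [powerKernel, Real.div_rpow (hs.trans_lt ht).le (sub_pos.2 ht).le, ← neg_sub 1 α,
      Real.rpow_neg (sub_pos.2 ht).le]
    ring
  intro t ht u hu htu
  simp only [hquot t ht, hquot u hu]
  have ht' : 0 < t - s := sub_pos.2 ht
  have hu' : 0 < u - s := sub_pos.2 hu
  have hu0 : 0 ≤ u := (hs.trans_lt hu).le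
  have := Real.Gamma_pos_of_pos hα
  gcongr ?_ ^ _ / _
  rw [div_le_div_iff₀ hu' ht']
  nlinarith

lemma mittagLeffler₂_self_eq_add_riemannLiouville (hα : 0 < α) (c : ℝ) {t : ℝ} (ht : 0 < t) :
    mittagLeffler₂ α α (c * t ^ α) = 1 / Real.Gamma α +
      c * (t ^ (1 - α) * riemannLiouville α (mittagLefflerKernel α α c) t) := by
  have hinv : t ^ (1 - α) * t ^ (α - 1) = 1 := by rw [← Real.rpow_add ht]; simp
  have h := mittagLefflerKernel_eq_add_riemannLiouville hα hα c ht
  nth_rw 1 [mittagLefflerKernel] at h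
  rw [powerKernel] at h
  linear_combination t ^ (1 - α) * h -
    (mittagLeffler₂ α α (c * t ^ α) - 1 / Real.Gamma α) * hinv

theorem mittagLeffler₂_self_pos_of_nonpos (hα : 0 < α) (hα1 : α ≤ 1) {c : ℝ} (hc : c ≤ 0) :
    0 < mittagLeffler₂ α α c := by
  let f : ℝ → ℝ := fun t => mittagLeffler₂ α α (c * t ^ α)
  let K : ℝ → ℝ → ℝ := fun t s =>
    -c * Real.Gamma α * powerKernel α s * (t ^ (1 - α) * powerKernel α (t - s))
  have hΓ : 0 < Real.Gamma α := Real.Gamma_pos_of_pos hα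
  have hcoeff : ∀ s, 0 < s → 0 ≤ -c * Real.Gamma α * powerKernel α s := fun s hs =>
    mul_nonneg (mul_nonneg (neg_nonneg.2 hc) hΓ.le) (powerKernel_nonneg hα hs.le)
  have hf : Continuous f := (continuous_mittagLeffler₂ hα hα).comp
    ((Real.continuous_rpow_const hα.le).const_mul c)
  have hf0 : 0 < f 0 := by
    simpa only [f, Real.zero_rpow hα.ne', mul_zero, mittagLeffler₂_eq_add hα hα 0, zero_mul,
      add_zero] using one_div_pos.2 hΓ
  have hK : ∀ t, 0 < t → IntervalIntegrable (K t) volume 0 t := fun t ht =>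
    ((intervalIntegrable_powerKernel_mul_powerKernel hα hα ht).const_mul
      (-c * Real.Gamma α * t ^ (1 - α))).congr fun s _ => by simp only [K]; ring
  have hK_nonneg : ∀ t s, 0 < s → s < t → 0 ≤ K t s := fun t s hs hst =>
    mul_nonneg (hcoeff s hs) (mul_nonneg (Real.rpow_nonneg (hs.trans hst).le _)
      (powerKernel_nonneg hα (sub_nonneg.2 hst.le)))
  have hK_anti : ∀ s, 0 < s → AntitoneOn (fun t => K t s) (Ioi s) := fun s hs t ht u hu htu =>
    mul_le_mul_of_nonneg_left (antitoneOn_rpow_mul_powerKernel_sub hα hα1 hs.le ht hu htu)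
      (hcoeff s hs)
  have hvolterra : ∀ t, 0 < t → f t + ∫ s in 0..t, K t s * f s = 1 / Real.Gamma α := by
    intro t ht
    have hKf : ∀ s, K t s * f s =
        -c * t ^ (1 - α) * (powerKernel α (t - s) * mittagLefflerKernel α α c s) := fun s => by
      simp only [K, f, mittagLefflerKernel, powerKernel]
      field_simp
    simp only [hKf, f]
    rw [intervalIntegral.integral_const_mul,
      mittagLeffler₂_self_eq_add_riemannLiouville hα c ht, riemannLiouville]
    ring
  have hpos := pos_of_monotoneOn_add_integral hf.continuousOn hf0 hK hK_nonneg hK_anti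
    (fun t ht u hu _ => ((hvolterra t ht).trans (hvolterra u hu).symm).le) zero_le_one
  simpa only [f, Real.one_rpow, mul_one] using hpos

lemma mittagLefflerKernel_self_nonneg (hα : 0 < α) (hα1 : α ≤ 1) {c t : ℝ} (hc : c ≤ 0)
    (ht : 0 ≤ t) : 0 ≤ mittagLefflerKernel α α c t :=
  mul_nonneg (Real.rpow_nonneg ht _) (mittagLeffler₂_self_pos_of_nonpos hα hα1
    (mul_nonpos_of_nonpos_of_nonneg hc (Real.rpow_nonneg ht _))).le

lemma antitoneOn_mittagLefflerKernel_one (hα : 0 < α) (hα1 : α ≤ 1) {c : ℝ} (hc : c ≤ 0) :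
    AntitoneOn (mittagLefflerKernel α 1 c) (Ioi 0) := by
  intro s hs t ht hst
  rw [mittagLefflerKernel_one_eq_one_add_integral hα c hs,
    mittagLefflerKernel_one_eq_one_add_integral hα c ht]
  gcongr 1 + ?_
  refine mul_le_mul_of_nonpos_left (intervalIntegral.integral_mono_interval le_rfl hs.le hst ?_
    (intervalIntegrable_mittagLefflerKernel hα hα c ht)) hc
  filter_upwards [ae_restrict_mem measurableSet_Ioc] with u hu
  exact mittagLefflerKernel_self_nonneg hα hα1 hc hu.1.le

end Relaxation

section Bounds

variable {α z : ℝ}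

lemma one_le_one_add_Gamma_mul_mittagLeffler₂ (hα : 0 < α) (hα1 : α < 1) (hz : 0 ≤ z) :
    1 ≤ (1 + Real.Gamma (1 - α) * z) * mittagLeffler₂ α 1 (-z) := by
  have hβ : 0 < 1 - α := sub_pos.2 hα1
  have hΓ : 0 < Real.Gamma (1 - α) := Real.Gamma_pos_of_pos hβ
  have hlower := powerKernel_mul_integral_le_riemannLiouville hβ (by linarith) one_pos
    (intervalIntegrable_mittagLefflerKernel hα hα (-z) one_pos)
    (intervalIntegrable_powerKernel_mul_mittagLefflerKernel hα hα hβ (-z) one_pos)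
    fun s hs => mittagLefflerKernel_self_nonneg hα hα1.le (neg_nonpos.2 hz) hs.1.le
  rw [riemannLiouville_mittagLefflerKernel hα hα hβ (-z) one_pos, sub_add_cancel,
    mittagLefflerKernel_apply_one, powerKernel_one_right, one_div_mul_eq_div, div_le_iff₀ hΓ]
    at hlower
  have hint := mittagLefflerKernel_one_eq_one_add_integral hα (-z) one_pos
  rw [mittagLefflerKernel_apply_one] at hint
  linarith [mul_le_mul_of_nonneg_left hlower hz]

lemma mittagLeffler₂_mul_one_add_div_Gamma_le_one (hα : 0 < α) (hα1 : α ≤ 1) (hz : 0 ≤ z) :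
    mittagLeffler₂ α 1 (-z) * (1 + z / Real.Gamma (1 + α)) ≤ 1 := by
  have hupper := powerKernel_add_one_mul_le_riemannLiouville hα one_pos
    (intervalIntegrable_powerKernel_mul_mittagLefflerKernel hα one_pos hα (-z) one_pos)
    fun s hs => antitoneOn_mittagLefflerKernel_one hα hα1 (neg_nonpos.2 hz) hs.1
      (mem_Ioi.2 one_pos) hs.2.le
  have heq := mittagLefflerKernel_eq_add_riemannLiouville hα one_pos (-z) one_pos
  rw [mittagLefflerKernel_apply_one, powerKernel_one_right, add_comm α 1] at hupper
  rw [mittagLefflerKernel_apply_one, powerKernel_one_left] at heq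
  calc mittagLeffler₂ α 1 (-z) * (1 + z / Real.Gamma (1 + α))
      = mittagLeffler₂ α 1 (-z) +
          z * (1 / Real.Gamma (1 + α) * mittagLeffler₂ α 1 (-z)) := by ring
    _ ≤ mittagLeffler₂ α 1 (-z) + z * riemannLiouville α (mittagLefflerKernel α 1 (-z)) 1 := by
        gcongr
    _ = 1 := by linarith

end Bounds

theorem mittagLeffler_sandwich (α : ℝ) (hα : α ∈ Set.Ioo (0 : ℝ) 1) :
    ∀ z : ℝ, 0 ≤ z →
      1 / (1 + Real.Gamma (1 - α) * z) ≤ mittagLeffler α (-z) ∧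
      mittagLeffler α (-z) ≤ 1 / (1 + z / Real.Gamma (1 + α)) := by
  obtain ⟨hα0, hα1⟩ := hα
  intro z hz
  have hΓ_sub : 0 < Real.Gamma (1 - α) := Real.Gamma_pos_of_pos (sub_pos.2 hα1)
  have hΓ_add : 0 < Real.Gamma (1 + α) := Real.Gamma_pos_of_pos (by positivity)
  change 1 / _ ≤ mittagLeffler₂ α 1 (-z) ∧ mittagLeffler₂ α 1 (-z) ≤ 1 / _
  constructor
  · rw [div_le_iff₀' (add_pos_of_pos_of_nonneg one_pos (mul_nonneg hΓ_sub.le hz))]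
    exact one_le_one_add_Gamma_mul_mittagLeffler₂ hα0 hα1 hz
  · rw [le_div_iff₀ (add_pos_of_pos_of_nonneg one_pos (div_nonneg hz hΓ_add.le))]
    exact mittagLeffler₂_mul_one_add_div_Gamma_le_one hα0 hα1.le hz
end

section
/- Let α ∈ (0,1) and let F_τ^n(λ) be the backward-Euler CQ approximation of E_{α,1}(-λ t_n^α) with t_n = nτ. Then for every λ > 0 and n ≥ 1, |E_{α,1}(-λ t_n^α) − F_τ^n(λ)| ≤ c/(1 + λ t_n^α) · n^{-1}, where c is independent of λ, n, τ. -/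
/-- The backward Euler convolution quadrature weights `b_j = (-1)^j binom(α, j)`,
with generating function `∑_j b_j ξ^j = (1-ξ)^α`. -/
noncomputable def cqWeight (α : ℝ) (j : ℕ) : ℝ :=
  (-1) ^ j * (∏ i ∈ Finset.range j, (α - i)) / (Nat.factorial j)

/-!
`t ↦ E_{α,1}(-t ^ α)` is the Laplace transform of a probability measure `μ` on the half-line, the
one with Stieltjes transform `s ^ (α - 1) / (s ^ α + 1)`. Comparing generating functions, the
quadrature solution with `λ τ ^ α = κ ^ α` is the integral of `(1 + κ x) ^ (-n)` against the same
`μ`. This reduces the error to the scalar bound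
`0 ≤ (1 + w / n) ^ (-n) - e ^ (-w) ≤ 27 / n * (1 + w)⁻¹` at `w = κ n x`. Its right-hand side
integrates to a value of the Stieltjes transform, and that value is `27 / n / (1 + λ t_n ^ α)`.
-/

section

open Real Set Filter Topology MeasureTheory
open scoped NNReal

/-! ### Contour integration over a period strip of the exponential -/

lemma tendsto_intervalIntegral_add_mul_I {Q : ℂ → ℂ} {l : Filter ℝ} [l.IsCountablyGenerated]
    {a b : ℝ} {c : ℂ} (hQ : ContinuousOn Q (Complex.im ⁻¹' uIcc a b))
    (hlim : Tendsto Q (comap Complex.re l ⊓ 𝓟 (Complex.im ⁻¹' uIcc a b)) (𝓝 c)) :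
    Tendsto (fun R : ℝ => ∫ y in a..b, Q (R + y * Complex.I)) l (𝓝 ((b - a) * c)) := by
  have hmem : ∀ R : ℝ, ∀ y ∈ uIcc a b, (R + y * Complex.I : ℂ) ∈ Complex.im ⁻¹' uIcc a b :=
    fun R y hy => by simpa using hy
  have hvert : ∀ y ∈ uIcc a b, Tendsto (fun R : ℝ => (R + y * Complex.I : ℂ)) l
      (comap Complex.re l ⊓ 𝓟 (Complex.im ⁻¹' uIcc a b)) := fun y hy =>
    tendsto_inf.2 ⟨tendsto_comap_iff.2 (tendsto_id.congr fun R => by simp),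
      tendsto_principal.2 (Eventually.of_forall fun R => hmem R y hy)⟩
  have hbdd : ∀ᶠ R : ℝ in l, ∀ y ∈ uIcc a b, ‖Q (R + y * Complex.I)‖ ≤ ‖c‖ + 1 := by
    have h := hlim.norm.eventually_le_const (lt_add_one ‖c‖)
    rw [eventually_inf_principal, eventually_comap] at h
    filter_upwards [h] with R hR y hy
    exact hR _ (by simp) (hmem R y hy)
  have hconst : ((b - a) * c : ℂ) = ∫ _ in a..b, c := by simp
  rw [hconst]
  refine intervalIntegral.tendsto_integral_filter_of_dominated_convergence (fun _ => ‖c‖ + 1)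
    (Eventually.of_forall fun R => ?_) ?_ intervalIntegrable_const ?_
  · refine (hQ.comp (Continuous.continuousOn (by fun_prop)) fun y hy =>
      hmem R y (uIoc_subset_uIcc hy)).aestronglyMeasurable measurableSet_uIoc
  · filter_upwards [hbdd] with R hR
    exact ae_of_all _ fun y hy => hR y (uIoc_subset_uIcc hy)
  · exact ae_of_all _ fun y hy => hlim.comp (hvert y (uIoc_subset_uIcc hy))

/-- The closed strip `|Im w| ≤ π`, on which the exponential maps onto the plane cut along the
negative half-line, both sides of the cut being kept. -/
def expStrip : Set ℂ := Complex.im ⁻¹' uIcc (-π) π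

lemma mem_expStrip {w : ℂ} : w ∈ expStrip ↔ |w.im| ≤ π := by
  rw [expStrip, mem_preimage, uIcc_of_le (by linarith [pi_pos]), mem_Icc, abs_le]

lemma expStrip_mem_nhds {a : ℂ} (ha : |a.im| < π) : expStrip ∈ 𝓝 a := by
  filter_upwards [(Complex.continuous_im.abs.isOpen_preimage _ isOpen_Iio).mem_nhds ha] with w hw
  exact mem_expStrip.2 (mem_Iio.1 hw).le

lemma exp_ne_exp_of_mem_expStrip {a w : ℂ} (ha : |a.im| < π) (hw : w ∈ expStrip) (hwa : w ≠ a) :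
    Complex.exp w ≠ Complex.exp a := by
  intro h
  obtain ⟨n, rfl⟩ := Complex.exp_eq_exp_iff_exists_int.1 h
  have him : |a.im + n * (2 * π)| ≤ π := by simpa using mem_expStrip.1 hw
  rw [abs_le] at him
  rw [abs_lt] at ha
  have hlt : (n : ℝ) < 1 := by nlinarith [pi_pos]
  have hgt : (-1 : ℝ) < n := by nlinarith [pi_pos]
  have hn : n = 0 := by
    have : n < 1 := by exact_mod_cast hlt
    have : -1 < n := by exact_mod_cast hgt
    omega
  exact hwa (by simp [hn])

/-- The quotient `(G w - G a) / (e ^ w - e ^ a)` with its removable singularity at `a` filled in. -/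
noncomputable def expDividedDifference (G : ℂ → ℂ) (a w : ℂ) : ℂ :=
  dslope G a w / dslope Complex.exp a w

lemma expDividedDifference_of_ne (G : ℂ → ℂ) {a w : ℂ} (hwa : w ≠ a) :
    expDividedDifference G a w = (G w - G a) / (Complex.exp w - Complex.exp a) := by
  rw [expDividedDifference, dslope_of_ne _ hwa, dslope_of_ne _ hwa, slope_def_field,
    slope_def_field, div_div_div_cancel_right₀ (sub_ne_zero.2 hwa)]

section Strip

variable {G : ℂ → ℂ} {a c : ℂ}

lemma differentiableOn_expDividedDifference (hG : DifferentiableOn ℂ G expStrip)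
    (ha : |a.im| < π) : DifferentiableOn ℂ (expDividedDifference G a) expStrip := by
  have hmem := expStrip_mem_nhds ha
  refine ((Complex.differentiableOn_dslope hmem).2 hG).div
    ((Complex.differentiableOn_dslope hmem).2 Complex.differentiable_exp.differentiableOn)
    fun w hw => ?_
  rcases eq_or_ne w a with rfl | hwa
  · simp [dslope_same, Complex.exp_ne_zero]
  · rw [dslope_of_ne _ hwa, slope_def_field]
    exact div_ne_zero (sub_ne_zero.2 (exp_ne_exp_of_mem_expStrip ha hw hwa)) (sub_ne_zero.2 hwa)

lemma tendsto_expDividedDifference_atBot (a : ℂ)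
    (hG : Tendsto G (comap Complex.re atBot ⊓ 𝓟 expStrip) (𝓝 c)) :
    Tendsto (expDividedDifference G a) (comap Complex.re atBot ⊓ 𝓟 expStrip)
      (𝓝 ((G a - c) / Complex.exp a)) := by
  have hexp : Tendsto Complex.exp (comap Complex.re atBot ⊓ 𝓟 expStrip) (𝓝 0) :=
    Complex.tendsto_exp_comap_re_atBot.mono_left inf_le_left
  have hquot := (hG.sub_const (G a)).div (hexp.sub_const (Complex.exp a))
    (by simp [Complex.exp_ne_zero])
  rw [zero_sub, div_neg, ← neg_div, neg_sub] at hquot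
  refine hquot.congr' ?_
  have hne : ∀ᶠ w in comap Complex.re atBot ⊓ 𝓟 expStrip, w ≠ a :=
    ((tendsto_comap.eventually_ne_atBot a.re).filter_mono inf_le_left).mono
      fun w hw h => hw (congrArg Complex.re h)
  filter_upwards [hne] with w hw
  exact (expDividedDifference_of_ne G hw).symm

lemma tendsto_expDividedDifference_atTop (a : ℂ)
    (hG : IsBoundedUnder (· ≤ ·) (comap Complex.re atTop ⊓ 𝓟 expStrip) (norm ∘ G)) :
    Tendsto (expDividedDifference G a) (comap Complex.re atTop ⊓ 𝓟 expStrip) (𝓝 0) := by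
  have hexp : Tendsto (fun w => (Complex.exp w - Complex.exp a)⁻¹)
      (comap Complex.re atTop ⊓ 𝓟 expStrip) (𝓝 0) :=
    tendsto_inv₀_cobounded.comp ((tendsto_sub_const_cobounded _).comp
      (Complex.tendsto_exp_comap_re_atTop.mono_left inf_le_left))
  have hbdd : IsBoundedUnder (· ≤ ·) (comap Complex.re atTop ⊓ 𝓟 expStrip)
      (norm ∘ fun w => G w - G a) := by
    obtain ⟨B, hB⟩ := hG
    refine ⟨B + ‖G a‖, eventually_map.2 ((eventually_map.1 hB).mono fun w hw => ?_)⟩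
    exact (norm_sub_le _ _).trans (add_le_add_left hw _)
  refine (isBoundedUnder_le_mul_tendsto_zero hbdd hexp).congr' ?_
  have hne : ∀ᶠ w in comap Complex.re atTop ⊓ 𝓟 expStrip, w ≠ a :=
    ((tendsto_comap.eventually_ne_atTop a.re).filter_mono inf_le_left).mono
      fun w hw h => hw (congrArg Complex.re h)
  filter_upwards [hne] with w hw
  rw [expDividedDifference_of_ne G hw, div_eq_mul_inv]

lemma expDividedDifference_jump (G : ℂ → ℂ) (ha : |a.im| < π) (v : ℝ) :
    expDividedDifference G a (v + (-π : ℝ) * Complex.I)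
        - expDividedDifference G a (v + π * Complex.I)
      = (G (v + π * Complex.I) - G (v - π * Complex.I)) / (Complex.exp v + Complex.exp a) := by
  have hexp_top : Complex.exp (v + π * Complex.I) = -Complex.exp v := by
    rw [Complex.exp_add, Complex.exp_pi_mul_I, mul_neg_one]
  have hexp_bot : Complex.exp (v + (-π : ℝ) * Complex.I) = -Complex.exp v := by
    rw [Complex.exp_add, Complex.ofReal_neg, neg_mul, Complex.exp_neg, Complex.exp_pi_mul_I]
    norm_num
  have hne_top : (v + π * Complex.I : ℂ) ≠ a := by
    rintro rfl
    simp [abs_of_pos pi_pos] at ha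
  have hne_bot : (v + (-π : ℝ) * Complex.I : ℂ) ≠ a := by
    rintro rfl
    simp [abs_of_pos pi_pos] at ha
  rw [expDividedDifference_of_ne G hne_top, expDividedDifference_of_ne G hne_bot, hexp_top,
    hexp_bot, ← sub_div, ← neg_div_neg_eq, Complex.ofReal_neg, neg_mul, ← sub_eq_add_neg]
  congr 1 <;> ring

/-- The contour integral of `(G w - G a) / (e ^ w - e ^ a)` around long rectangles filling the strip
vanishes; as `e ^ (v ± iπ) = -e ^ v`, its horizontal sides combine to the left-hand side. -/
lemma integral_jump_div_exp_add_exp (hG : DifferentiableOn ℂ G expStrip)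
    (hbot : Tendsto G (comap Complex.re atBot ⊓ 𝓟 expStrip) (𝓝 c))
    (htop : IsBoundedUnder (· ≤ ·) (comap Complex.re atTop ⊓ 𝓟 expStrip) (norm ∘ G))
    (ha : |a.im| < π)
    (hint : Integrable fun v : ℝ =>
      (G (v + π * Complex.I) - G (v - π * Complex.I)) / (Complex.exp v + Complex.exp a)) :
    ∫ v : ℝ, (G (v + π * Complex.I) - G (v - π * Complex.I)) / (Complex.exp v + Complex.exp a)
      = 2 * π * Complex.I * ((G a - c) / Complex.exp a) := by
  set Q := expDividedDifference G a
  have hQ : DifferentiableOn ℂ Q expStrip := differentiableOn_expDividedDifference hG ha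
  have hhoriz : ∀ R p : ℝ, |p| ≤ π →
      IntervalIntegrable (fun x : ℝ => Q (x + p * Complex.I)) volume (-R) R := fun R p hp =>
    (hQ.continuousOn.comp (Continuous.continuousOn (by fun_prop)) fun x _ =>
      mem_expStrip.2 (by simpa using hp)).intervalIntegrable
  have hrect : ∀ R : ℝ,
      (∫ v in (-R)..R, (G (v + π * Complex.I) - G (v - π * Complex.I)) /
          (Complex.exp v + Complex.exp a))
        + Complex.I * (∫ y in (-π)..π, Q (R + y * Complex.I))
        - Complex.I * (∫ y in (-π)..π, Q ((-R : ℝ) + y * Complex.I)) = 0 := by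
    intro R
    have hcauchy := Complex.integral_boundary_rect_eq_zero_of_differentiableOn Q
      ⟨-R, -π⟩ ⟨R, π⟩ (hQ.mono fun w hw => hw.2)
    simp only [smul_eq_mul] at hcauchy
    rw [← intervalIntegral.integral_sub (hhoriz R (-π) (by simp [abs_of_pos pi_pos]))
      (hhoriz R π (abs_of_pos pi_pos).le)] at hcauchy
    simpa only [Q, expDividedDifference_jump G ha] using hcauchy
  have hright := tendsto_intervalIntegral_add_mul_I hQ.continuousOn
    (tendsto_expDividedDifference_atTop a htop)
  have hleft := (tendsto_intervalIntegral_add_mul_I hQ.continuousOn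
    (tendsto_expDividedDifference_atBot a hbot)).comp tendsto_neg_atTop_atBot
  have hlim := ((intervalIntegral_tendsto_integral hint tendsto_neg_atTop_atBot tendsto_id).add
    (hright.const_mul Complex.I)).sub (hleft.const_mul Complex.I)
  have hzero := tendsto_nhds_unique hlim (tendsto_const_nhds.congr fun R => (hrect R).symm)
  push_cast at hzero
  linear_combination hzero

end Strip

/-! ### The spectral density -/

/-- The density in `v = log x` of the measure whose Stieltjes transform is
`s ^ (α - 1) / (s ^ α + 1)`. -/
noncomputable def spectralDensity (α v : ℝ) : ℝ :=
  sin (π * α) / (2 * π * (cosh (α * v) + cos (π * α)))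

section Density

variable {α : ℝ} (hα : α ∈ Ioo (0 : ℝ) 1)
include hα

lemma neg_one_lt_cos_pi_mul : -1 < cos (π * α) := by
  rw [← cos_pi]
  exact cos_lt_cos_of_nonneg_of_le_pi (by nlinarith [hα.1, pi_pos]) le_rfl
    (by nlinarith [hα.2, pi_pos])

lemma cosh_add_cos_pi_mul_pos (v : ℝ) : 0 < cosh (α * v) + cos (π * α) := by
  linarith [one_le_cosh (α * v), neg_one_lt_cos_pi_mul hα]

lemma spectralDensity_nonneg (v : ℝ) : 0 ≤ spectralDensity α v := by
  have hsin : 0 ≤ sin (π * α) := sin_nonneg_of_nonneg_of_le_pi (by nlinarith [hα.1, pi_pos])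
    (by nlinarith [hα.2, pi_pos])
  have := cosh_add_cos_pi_mul_pos hα v
  unfold spectralDensity
  positivity

lemma continuous_spectralDensity : Continuous (spectralDensity α) :=
  continuous_const.div (by fun_prop)
    fun v => (mul_pos two_pi_pos (cosh_add_cos_pi_mul_pos hα v)).ne'

lemma integrable_spectralDensity : Integrable (spectralDensity α) := by
  have hlarge : ∀ᶠ v in atTop, 4 ≤ exp (α * v) :=
    (tendsto_exp_atTop.comp (tendsto_id.const_mul_atTop hα.1)).eventually_ge_atTop 4
  refine (continuous_spectralDensity hα).locallyIntegrable
    |>.integrable_of_isBigO_atTop_of_norm_isNegInvariant (g := fun v => exp (-α * v))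
    (ae_of_all _ fun v => by simp [spectralDensity]) (.of_bound 4 ?_)
    ⟨Ioi 0, Ioi_mem_atTop 0, integrableOn_exp_mul_Ioi (neg_neg_of_pos hα.1) 0⟩
  filter_upwards [hlarge] with v hv
  have hcosh : exp (α * v) / 4 ≤ cosh (α * v) + cos (π * α) := by
    rw [cosh_eq]
    linarith [neg_one_lt_cos_pi_mul hα, exp_pos (-(α * v))]
  have hpi : 1 ≤ 2 * π := by linarith [pi_gt_three]
  rw [norm_of_nonneg (spectralDensity_nonneg hα v), norm_of_nonneg (exp_pos _).le]
  calc spectralDensity α v ≤ 1 / (1 * (exp (α * v) / 4)) := by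
        unfold spectralDensity
        gcongr
        exact sin_le_one _
    _ = 4 * exp (-α * v) := by
        rw [neg_mul, exp_neg]
        field_simp

lemma exp_mul_add_one_ne_zero {w : ℂ} (hw : w ∈ expStrip) : Complex.exp (α * w) + 1 ≠ 0 := by
  have him : |((α : ℂ) * w).im| < π := by
    rw [Complex.im_ofReal_mul, abs_mul, abs_of_pos hα.1]
    nlinarith [mem_expStrip.1 hw, hα.1, hα.2, abs_nonneg w.im, pi_pos]
  have hpi : (π * Complex.I : ℂ) ∈ expStrip := mem_expStrip.2 (by simp [abs_of_pos pi_pos])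
  have hne : (π * Complex.I : ℂ) ≠ α * w := by
    intro h
    rw [← h] at him
    simp [abs_of_pos pi_pos] at him
  intro h
  apply exp_ne_exp_of_mem_expStrip him hpi hne
  rw [Complex.exp_pi_mul_I]
  linear_combination -h

end Density

/-- The function `s ^ α / (s ^ α + 1)` in the variable `w = log s`. -/
noncomputable def expSymbol (α : ℝ) (w : ℂ) : ℂ :=
  Complex.exp (α * w) / (Complex.exp (α * w) + 1)

section Symbol

variable {α : ℝ} (hα : α ∈ Ioo (0 : ℝ) 1)
include hα

lemma differentiableOn_expSymbol : DifferentiableOn ℂ (expSymbol α) expStrip := by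
  have hexp : Differentiable ℂ fun w : ℂ => Complex.exp (α * w) := by fun_prop
  exact hexp.differentiableOn.div (hexp.add_const 1).differentiableOn
    fun w hw => exp_mul_add_one_ne_zero hα hw

lemma tendsto_expSymbol_atBot :
    Tendsto (expSymbol α) (comap Complex.re atBot) (𝓝 0) := by
  have hexp : Tendsto (fun w : ℂ => Complex.exp (α * w)) (comap Complex.re atBot) (𝓝 0) :=
    Complex.tendsto_exp_comap_re_atBot.comp (tendsto_comap_iff.2
      ((tendsto_comap.const_mul_atBot hα.1).congr fun w => by simp))
  have hlim := hexp.div (hexp.add_const 1) (by simp)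
  rwa [zero_div] at hlim

lemma tendsto_expSymbol_atTop :
    Tendsto (expSymbol α) (comap Complex.re atTop ⊓ 𝓟 expStrip) (𝓝 1) := by
  have hexp : Tendsto (fun w : ℂ => Complex.exp (α * w) + 1) (comap Complex.re atTop)
      (Bornology.cobounded ℂ) :=
    (tendsto_add_const_cobounded 1).comp (Complex.tendsto_exp_comap_re_atTop.comp
      (tendsto_comap_iff.2 ((tendsto_comap.const_mul_atTop hα.1).congr fun w => by simp)))
  have hlim := ((tendsto_inv₀_cobounded.comp hexp).const_sub 1).mono_left
    (inf_le_left : comap Complex.re atTop ⊓ 𝓟 expStrip ≤ _)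
  rw [sub_zero] at hlim
  refine hlim.congr' (eventually_inf_principal.2 (Eventually.of_forall fun w hw => ?_))
  have := exp_mul_add_one_ne_zero hα hw
  simp only [expSymbol, Function.comp_apply]
  field_simp
  ring

lemma expSymbol_jump (v : ℝ) :
    expSymbol α (v + π * Complex.I) - expSymbol α (v - π * Complex.I)
      = 2 * π * Complex.I * spectralDensity α v := by
  have hmem : ∀ p : ℝ, |p| ≤ π → (v + p * Complex.I : ℂ) ∈ expStrip := fun p hp =>
    mem_expStrip.2 (by simpa using hp)
  have htop := exp_mul_add_one_ne_zero hα (hmem π (abs_of_pos pi_pos).le)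
  have hbot := exp_mul_add_one_ne_zero hα (hmem (-π) (by simp [abs_of_pos pi_pos]))
  have hden : (2 * Complex.cosh (α * v) + 2 * Complex.cos (π * α) : ℂ) ≠ 0 := by
    have := (mul_pos two_pos (cosh_add_cos_pi_mul_pos hα v)).ne'
    rw [mul_add] at this
    exact_mod_cast this
  have hpi : (π : ℂ) ≠ 0 := by exact_mod_cast pi_ne_zero
  have hdensity : 2 * π * Complex.I * spectralDensity α v = 2 * Complex.sin (π * α) * Complex.I /
      (2 * Complex.cosh (α * v) + 2 * Complex.cos (π * α)) := by
    unfold spectralDensity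
    push_cast
    rw [← mul_add] at hden ⊢
    have := right_ne_zero_of_mul hden
    field_simp
  have hsplit : ∀ p : ℂ, Complex.exp (α * (v + p * Complex.I))
      = Complex.exp (α * v) * Complex.exp (p * α * Complex.I) := fun p => by
    rw [← Complex.exp_add]
    ring_nf
  rw [Complex.ofReal_neg] at hbot
  rw [sub_eq_add_neg (v : ℂ), ← neg_mul, hdensity, expSymbol, expSymbol, div_sub_div _ _ htop hbot,
    div_eq_div_iff (mul_ne_zero htop hbot) hden, Complex.two_cosh, Complex.two_cos,
    Complex.two_sin, hsplit, hsplit]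
  have hv : Complex.exp (α * v) * Complex.exp (-(α * v)) = 1 := by simp [← Complex.exp_add]
  have hπ : Complex.exp (π * α * Complex.I) * Complex.exp (-(π * α) * Complex.I) = 1 := by
    simp [← Complex.exp_add]
  rw [neg_mul (π : ℂ)]
  set p := Complex.exp (α * v)
  set q := Complex.exp (-(α * v))
  set E := Complex.exp (π * α * Complex.I)
  set E' := Complex.exp (-(π * α) * Complex.I)
  linear_combination (E - E') * hv - p ^ 2 * (E - E') * hπ
    + (E - E') * (p * E + 1) * (p * E' + 1) * Complex.I_sq

lemma integral_spectralDensity_div_exp_add_exp (a : ℝ) :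
    ∫ v, spectralDensity α v / (exp v + exp a) = exp (α * a) / (exp (α * a) + 1) / exp a := by
  have hint : Integrable fun v => spectralDensity α v / (exp v + exp a) := by
    have hcont : Continuous fun v => spectralDensity α v / (exp v + exp a) :=
      (continuous_spectralDensity hα).div (by fun_prop) fun v => by positivity
    refine ((integrable_spectralDensity hα).div_const (exp a)).mono' hcont.aestronglyMeasurable
      (ae_of_all _ fun v => ?_)
    have := spectralDensity_nonneg hα v
    rw [norm_of_nonneg (by positivity)]
    gcongr
    linarith [exp_pos v]
  have hjump : ∀ v : ℝ, (expSymbol α (v + π * Complex.I) - expSymbol α (v - π * Complex.I)) /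
      (Complex.exp v + Complex.exp a)
      = 2 * π * Complex.I * ((spectralDensity α v / (exp v + exp a) : ℝ) : ℂ) := fun v => by
    rw [expSymbol_jump hα]
    push_cast
    ring
  have hcontour := integral_jump_div_exp_add_exp (a := a) (differentiableOn_expSymbol hα)
    ((tendsto_expSymbol_atBot hα).mono_left inf_le_left)
    (tendsto_expSymbol_atTop hα).norm.isBoundedUnder_le (by simp [pi_pos])
    ((hint.ofReal.const_mul _).congr (ae_of_all _ fun v => (hjump v).symm))
  simp only [hjump] at hcontour
  rw [integral_const_mul, integral_complex_ofReal] at hcontour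
  have hcomplex := mul_left_cancel₀ Complex.two_pi_I_ne_zero hcontour
  rw [sub_zero, expSymbol] at hcomplex
  exact_mod_cast hcomplex

end Symbol

/-! ### Transforms of measures on the half-line -/

/-- The Laplace transform `∫ e ^ (-t x) dμ(x)` of a measure on the half-line. -/
noncomputable def laplaceTransform (μ : Measure ℝ≥0) (t : ℝ) : ℝ :=
  ∫ x, exp (-(t * x)) ∂μ

/-- The backward Euler analogue of `laplaceTransform μ (κ * n)`: each exponential
`e ^ (-κ n x)` is replaced by its approximation after `n` implicit Euler steps of length `κ`. -/
noncomputable def eulerTransform (μ : Measure ℝ≥0) (κ : ℝ) (n : ℕ) : ℝ :=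
  ∫ x, ((1 + κ * x) ^ n)⁻¹ ∂μ

/-- The Stieltjes transform `∫ 1 / (x + s) dμ(x)` of a measure on the half-line. -/
noncomputable def stieltjesTransform (μ : Measure ℝ≥0) (s : ℝ) : ℝ :=
  ∫ x, (x + s)⁻¹ ∂μ

lemma exists_stieltjesTransform_eq {α : ℝ} (hα : α ∈ Ioc (0 : ℝ) 1) :
    ∃ μ : Measure ℝ≥0, IsFiniteMeasure μ ∧
      ∀ s > 0, stieltjesTransform μ s = s ^ (α - 1) / (s ^ α + 1) := by
  rcases hα.2.eq_or_lt with rfl | hα1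
  · exact ⟨Measure.dirac 1, inferInstance, fun s _ => by simp [stieltjesTransform, add_comm]⟩
  have hα : α ∈ Ioo (0 : ℝ) 1 := ⟨hα.1, hα1⟩
  have hcont := continuous_spectralDensity hα
  have := isFiniteMeasure_withDensity_ofReal (integrable_spectralDensity hα).2
  refine ⟨(volume.withDensity fun v => ENNReal.ofReal (spectralDensity α v)).map
    fun v => (exp v).toNNReal, inferInstance, fun s hs => ?_⟩
  have hmeas : Measurable fun x : ℝ≥0 => ((x : ℝ) + s)⁻¹ := by fun_prop
  have hlog : exp (α * log s) = s ^ α := by rw [rpow_def_of_pos hs, mul_comm]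
  calc stieltjesTransform _ s
      = ∫ v, (spectralDensity α v / (exp v + exp (log s))) := by
        rw [stieltjesTransform, integral_map (by fun_prop) hmeas.aestronglyMeasurable,
          integral_withDensity_eq_integral_toReal_smul (by fun_prop) (by simp)]
        refine integral_congr_ae (ae_of_all _ fun v => ?_)
        simp only [ENNReal.toReal_ofReal (spectralDensity_nonneg hα v), smul_eq_mul,
          Real.coe_toNNReal _ (exp_pos v).le, exp_log hs, div_eq_mul_inv]
    _ = s ^ (α - 1) / (s ^ α + 1) := by
        rw [integral_spectralDensity_div_exp_add_exp hα, exp_log hs, hlog, rpow_sub_one hs.ne']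
        ring

section Transforms

variable {κ s t ξ : ℝ}

lemma integrable_exp_neg_mul (μ : Measure ℝ≥0) [IsFiniteMeasure μ] (ht : 0 ≤ t) :
    Integrable (fun x : ℝ≥0 => exp (-(t * x))) μ :=
  .of_bound (by fun_prop) 1 (ae_of_all _ fun x => by
    rw [norm_of_nonneg (exp_pos _).le]
    exact exp_le_one_iff.2 (neg_nonpos.2 (by positivity)))

lemma integrable_inv_one_add_mul_pow (μ : Measure ℝ≥0) [IsFiniteMeasure μ] (hκ : 0 ≤ κ) (n : ℕ) :
    Integrable (fun x : ℝ≥0 => ((1 + κ * x) ^ n)⁻¹) μ :=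
  .of_bound (by fun_prop) 1 (ae_of_all _ fun x => by
    rw [norm_of_nonneg (by positivity)]
    exact inv_le_one_of_one_le₀ (one_le_pow₀ (le_add_of_nonneg_right (by positivity))))

lemma laplaceTransform_zero (μ : Measure ℝ≥0) : laplaceTransform μ 0 = μ.real univ := by
  simp [laplaceTransform]

lemma eulerTransform_zero (μ : Measure ℝ≥0) (κ : ℝ) : eulerTransform μ κ 0 = μ.real univ := by
  simp [eulerTransform]

lemma laplaceTransform_nonneg (μ : Measure ℝ≥0) (t : ℝ) : 0 ≤ laplaceTransform μ t :=
  integral_nonneg fun _ => (exp_pos _).le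

lemma laplaceTransform_le (μ : Measure ℝ≥0) [IsFiniteMeasure μ] (ht : 0 ≤ t) :
    laplaceTransform μ t ≤ μ.real univ := by
  rw [← laplaceTransform_zero]
  refine integral_mono (integrable_exp_neg_mul μ ht) (integrable_exp_neg_mul μ le_rfl) fun x => ?_
  gcongr

lemma continuousOn_laplaceTransform (μ : Measure ℝ≥0) [IsFiniteMeasure μ] :
    ContinuousOn (laplaceTransform μ) (Ici 0) := by
  refine continuousOn_of_dominated (bound := fun _ => 1) (fun t _ => by fun_prop)
    (fun t ht => ae_of_all _ fun x => ?_) (integrable_const 1)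
    (ae_of_all _ fun x => by fun_prop)
  rw [norm_of_nonneg (exp_pos _).le]
  exact exp_le_one_iff.2 (neg_nonpos.2 (mul_nonneg ht x.2))

lemma integral_exp_neg_mul_mul_laplaceTransform (μ : Measure ℝ≥0) [IsFiniteMeasure μ]
    (hs : 0 < s) :
    ∫ t in Ioi 0, exp (-(s * t)) * laplaceTransform μ t = stieltjesTransform μ s := by
  have hint : Integrable (Function.uncurry fun (t : ℝ) (x : ℝ≥0) => exp (-(s * t)) * exp (-(t * x)))
      ((volume.restrict (Ioi 0)).prod μ) := by
    have hdom : Integrable (fun p : ℝ × ℝ≥0 => exp (-(s * p.1)) * 1)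
        ((volume.restrict (Ioi 0)).prod μ) := by
      refine Integrable.mul_prod (f := fun t => exp (-(s * t))) (g := fun _ : ℝ≥0 => 1) ?_
        (integrable_const 1)
      simpa only [IntegrableOn, neg_mul] using integrableOn_exp_mul_Ioi (neg_neg_of_pos hs) 0
    have hpos : ∀ᵐ p ∂(volume.restrict (Ioi (0 : ℝ))).prod μ, 0 < p.1 :=
      Measure.quasiMeasurePreserving_fst.ae (ae_restrict_mem measurableSet_Ioi)
    refine hdom.mono' (by fun_prop) (hpos.mono fun p hp => ?_)
    rw [Function.uncurry_apply_pair, norm_of_nonneg (by positivity)]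
    gcongr
    exact exp_le_one_iff.2 (neg_nonpos.2 (by positivity))
  simp only [laplaceTransform, ← integral_const_mul]
  rw [integral_integral_swap hint]
  refine integral_congr_ae (ae_of_all _ fun x => ?_)
  have hneg : -(x + s : ℝ) < 0 := neg_neg_of_pos (by positivity)
  have hexp := integral_exp_mul_Ioi hneg 0
  rw [mul_zero, exp_zero, neg_div_neg_eq, one_div] at hexp
  simp only [← hexp, ← exp_add]
  congr! 3
  ring

lemma inv_mul_stieltjesTransform_div (μ : Measure ℝ≥0) (hκ : κ ≠ 0) (a : ℝ) :
    κ⁻¹ * stieltjesTransform μ (a / κ) = ∫ x, (κ * x + a)⁻¹ ∂μ := by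
  rw [stieltjesTransform, ← integral_const_mul]
  refine integral_congr_ae (ae_of_all _ fun x => ?_)
  simp only [← mul_inv, mul_add, mul_div_cancel₀ a hκ]

lemma hasSum_pow_mul_inv_one_add_pow {y : ℝ} (hy : 0 ≤ y) (hξ : |ξ| < 1) :
    HasSum (fun n : ℕ => ξ ^ n * ((1 + y) ^ (n + 1))⁻¹) (y + (1 - ξ))⁻¹ := by
  have hratio : |ξ * (1 + y)⁻¹| < 1 := by
    rw [abs_mul, abs_of_nonneg (inv_nonneg.2 (by positivity : 0 ≤ 1 + y)), ← div_eq_mul_inv,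
      div_lt_one (by positivity)]
    linarith
  have hgeom := (hasSum_geometric_of_abs_lt_one hratio).mul_left (1 + y)⁻¹
  have hval : (1 + y)⁻¹ * (1 - ξ * (1 + y)⁻¹)⁻¹ = (y + (1 - ξ))⁻¹ := by
    rw [← mul_inv, mul_sub, mul_one, mul_left_comm, mul_inv_cancel₀ (by positivity)]
    ring
  rw [hval] at hgeom
  refine hgeom.congr_fun fun n => ?_
  rw [mul_pow, inv_pow, pow_succ', mul_inv]
  ring

lemma hasSum_pow_mul_eulerTransform (μ : Measure ℝ≥0) [IsFiniteMeasure μ] (hκ : 0 < κ)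
    (hξ : |ξ| < 1) :
    HasSum (fun n : ℕ => ξ ^ n * eulerTransform μ κ (n + 1))
      (κ⁻¹ * stieltjesTransform μ ((1 - ξ) / κ)) := by
  have hsum := hasSum_integral_of_dominated_convergence (μ := μ)
    (F := fun (n : ℕ) (x : ℝ≥0) => ξ ^ n * ((1 + κ * x) ^ (n + 1))⁻¹)
    (f := fun x => (κ * x + (1 - ξ))⁻¹) (fun n _ => |ξ| ^ n) (fun n => by fun_prop)
    (fun n => ae_of_all _ fun x => ?_)
    (ae_of_all _ fun _ => summable_geometric_of_lt_one (abs_nonneg ξ) hξ)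
    (integrable_const _)
    (ae_of_all _ fun x => hasSum_pow_mul_inv_one_add_pow (by positivity) hξ)
  · simpa only [eulerTransform, inv_mul_stieltjesTransform_div μ hκ.ne', integral_const_mul]
      using hsum
  · rw [norm_mul, norm_pow, norm_eq_abs, norm_of_nonneg (by positivity)]
    exact mul_le_of_le_one_right (by positivity)
      (inv_le_one_of_one_le₀ (one_le_pow₀ (le_add_of_nonneg_right (by positivity))))

end Transforms

/-! ### Error of the implicit Euler scheme -/

lemma one_add_div_pow_le_one_add_div_pow {w : ℝ} (hw : 0 ≤ w) {m n : ℕ} (hm : m ≠ 0)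
    (hmn : m ≤ n) : (1 + w / m) ^ m ≤ (1 + w / n) ^ n := by
  have hm' : (0 : ℝ) < m := by positivity
  have hn' : (0 : ℝ) < n := hm'.trans_le (by exact_mod_cast hmn)
  have hbernoulli : 1 + w / m ≤ (1 + w / n) ^ (n / m : ℝ) := by
    have h := one_add_mul_self_le_rpow_one_add (s := w / n) (p := n / m)
      (by linarith [div_nonneg hw hn'.le]) ((one_le_div hm').2 (by exact_mod_cast hmn))
    rwa [div_mul_div_comm, mul_comm (m : ℝ), mul_div_mul_left _ _ hn'.ne'] at h
  calc (1 + w / m) ^ m ≤ ((1 + w / n) ^ (n / m : ℝ)) ^ m := by gcongr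
    _ = (1 + w / n) ^ n := by
      rw [← rpow_mul_natCast (by positivity), div_mul_cancel₀ _ hm'.ne', rpow_natCast]

lemma exp_neg_le_inv_one_add_div_pow {w : ℝ} (hw : 0 ≤ w) {n : ℕ} (hn : n ≠ 0) :
    exp (-w) ≤ ((1 + w / n) ^ n)⁻¹ := by
  have hn' : (n : ℝ) ≠ 0 := by exact_mod_cast hn
  rw [exp_neg]
  gcongr
  calc (1 + w / n) ^ n ≤ exp (w / n) ^ n := by
        gcongr
        linarith [add_one_le_exp (w / n)]
    _ = exp w := by rw [← exp_nat_mul, mul_div_cancel₀ _ hn']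

lemma inv_one_add_div_pow_sub_exp_neg_le_sq {w : ℝ} (hw : 0 ≤ w) {n : ℕ} (hn : n ≠ 0) :
    ((1 + w / n) ^ n)⁻¹ - exp (-w) ≤ w ^ 2 / n * ((1 + w / n) ^ n)⁻¹ := by
  set y := w / n with hy
  have hy0 : 0 ≤ y := by positivity
  have hwy : w = n * y := by rw [hy]; field_simp
  have hlower : 1 - y ^ 2 ≤ (1 + y) * exp (-y) := by
    nlinarith [add_one_le_exp (-y)]
  have hbernoulli : 1 - w ^ 2 / n ≤ (1 + y) ^ n * exp (-w) := by
    calc 1 - w ^ 2 / n = 1 + n * (-y ^ 2) := by rw [hwy]; field_simp; ring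
      _ ≤ 1 + n * ((1 + y) * exp (-y) - 1) := by gcongr; linarith
      _ ≤ (1 + ((1 + y) * exp (-y) - 1)) ^ n :=
        one_add_mul_le_pow (by linarith [mul_pos (by linarith : 0 < 1 + y) (exp_pos (-y))]) n
      _ = (1 + y) ^ n * exp (-w) := by
        rw [add_sub_cancel, mul_pow, ← exp_nat_mul, hwy, mul_neg]
  have hpow : 0 < (1 + y) ^ n := by positivity
  rw [← div_eq_mul_inv, le_div_iff₀ hpow, sub_mul, inv_mul_cancel₀ hpow.ne']
  linarith

lemma inv_one_add_div_pow_sub_exp_neg_le {w : ℝ} (hw : 0 ≤ w) {n : ℕ} (hn : n ≠ 0) :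
    ((1 + w / n) ^ n)⁻¹ - exp (-w) ≤ 27 / n * (1 + w)⁻¹ := by
  have hn' : (0 : ℝ) < n := by positivity
  rcases lt_or_ge n 3 with hsmall | hlarge
  · have hn3 : (n : ℝ) ≤ 3 := by exact_mod_cast hsmall.le
    have hpow : 1 + w ≤ (1 + w / n) ^ n := by
      simpa using one_add_div_pow_le_one_add_div_pow hw one_ne_zero (Nat.one_le_iff_ne_zero.2 hn)
    calc ((1 + w / n) ^ n)⁻¹ - exp (-w) ≤ (1 + w)⁻¹ := by
          have : ((1 + w / n) ^ n)⁻¹ ≤ (1 + w)⁻¹ := by gcongr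
          linarith [exp_pos (-w)]
      _ ≤ 27 / n * (1 + w)⁻¹ :=
          le_mul_of_one_le_left (by positivity) ((one_le_div hn').2 (by linarith))
  · have hpow : w ^ 2 * (1 + w) ≤ 27 * (1 + w / n) ^ n := by
      calc w ^ 2 * (1 + w) ≤ 27 * (1 + w / (3 : ℕ)) ^ 3 := by push_cast; nlinarith
        _ ≤ 27 * (1 + w / n) ^ n := by
          gcongr 27 * ?_
          exact one_add_div_pow_le_one_add_div_pow hw three_ne_zero hlarge
    refine (inv_one_add_div_pow_sub_exp_neg_le_sq hw hn).trans ?_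
    rw [← div_eq_mul_inv, ← div_eq_mul_inv, div_div, div_div, div_le_div_iff₀ (by positivity)
      (by positivity)]
    calc w ^ 2 * (n * (1 + w)) = n * (w ^ 2 * (1 + w)) := by ring
      _ ≤ n * (27 * (1 + w / n) ^ n) := by gcongr
      _ = 27 * (n * (1 + w / n) ^ n) := by ring

lemma abs_laplaceTransform_sub_eulerTransform_le (μ : Measure ℝ≥0) [IsFiniteMeasure μ] {κ : ℝ}
    (hκ : 0 < κ) {n : ℕ} (hn : n ≠ 0) :
    |laplaceTransform μ (κ * n) - eulerTransform μ κ n|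
      ≤ 27 / n * ((κ * n)⁻¹ * stieltjesTransform μ (1 / (κ * n))) := by
  have hdiv : ∀ x : ℝ≥0, κ * x = κ * n * x / n := fun x => by field_simp
  have hdom : Integrable (fun x : ℝ≥0 => 27 / n * (κ * n * x + 1)⁻¹) μ := by
    simpa only [pow_one, add_comm] using
      (integrable_inv_one_add_mul_pow μ (by positivity : 0 ≤ κ * n) 1).const_mul (27 / n)
  rw [laplaceTransform, eulerTransform, ← integral_sub (integrable_exp_neg_mul μ (by positivity))
    (integrable_inv_one_add_mul_pow μ hκ.le n),
    inv_mul_stieltjesTransform_div μ (by positivity), ← integral_const_mul, ← norm_eq_abs]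
  refine norm_integral_le_of_norm_le hdom (ae_of_all _ fun x => ?_)
  rw [norm_sub_rev, hdiv, add_comm _ 1, norm_of_nonneg
    (sub_nonneg.2 (exp_neg_le_inv_one_add_div_pow (by positivity) hn))]
  exact inv_one_add_div_pow_sub_exp_neg_le (by positivity) hn

/-! ### Injectivity of the Laplace transform -/

section Moments

variable {a b : ℝ} {f : ℝ → ℝ}

lemma integral_polynomial_mul_eq_zero (hf : IntervalIntegrable f volume a b)
    (hmoments : ∀ n : ℕ, ∫ x in a..b, x ^ n * f x = 0) (p : Polynomial ℝ) :
    ∫ x in a..b, p.eval x * f x = 0 := by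
  induction p using Polynomial.induction_on' with
  | add p q hp hq =>
    simp only [Polynomial.eval_add, add_mul]
    rw [intervalIntegral.integral_add (hf.continuousOn_mul (by fun_prop))
      (hf.continuousOn_mul (by fun_prop)), hp, hq, add_zero]
  | monomial n r =>
    simp only [Polynomial.eval_monomial, mul_assoc]
    rw [intervalIntegral.integral_const_mul, hmoments, mul_zero]

lemma integral_mul_self_eq_zero_of_forall_integral_pow_mul_eq_zero (hab : a ≤ b)
    (hf : ContinuousOn f (Icc a b)) (hmoments : ∀ n : ℕ, ∫ x in a..b, x ^ n * f x = 0) :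
    ∫ x in a..b, f x * f x = 0 := by
  have hf' : ContinuousOn f (uIcc a b) := by rwa [uIcc_of_le hab]
  have hint := hf'.intervalIntegrable (μ := volume)
  have happrox : ∀ ε > 0, |∫ x in a..b, f x * f x| ≤ ε * ∫ x in a..b, |f x| := by
    intro ε hε
    obtain ⟨p, hp⟩ := exists_polynomial_near_of_continuousOn a b f hf ε hε
    have hsub : ∫ x in a..b, f x * f x = ∫ x in a..b, (f x - p.eval x) * f x := by
      simp only [sub_mul]
      rw [intervalIntegral.integral_sub (hint.continuousOn_mul hf')
        (hint.continuousOn_mul (by fun_prop)), integral_polynomial_mul_eq_zero hint hmoments p,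
        sub_zero]
    rw [hsub, ← intervalIntegral.integral_const_mul, ← norm_eq_abs]
    refine intervalIntegral.norm_integral_le_of_norm_le hab
      (ae_of_all _ fun x hx => ?_) (hint.abs.const_mul ε)
    rw [norm_mul, norm_eq_abs, norm_eq_abs, abs_sub_comm]
    exact mul_le_mul_of_nonneg_right (hp x (Ioc_subset_Icc_self hx)).le (abs_nonneg _)
  have hlim : Tendsto (fun ε : ℝ => ε * ∫ x in a..b, |f x|) (𝓝[>] 0) (𝓝 0) := by
    have h := (tendsto_id (x := 𝓝 (0 : ℝ))).mul_const (∫ x in a..b, |f x|)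
    rw [zero_mul] at h
    exact h.mono_left nhdsWithin_le_nhds
  exact abs_nonpos_iff.1 (ge_of_tendsto hlim (eventually_mem_nhdsWithin.mono happrox))

lemma eqOn_zero_of_forall_integral_pow_mul_eq_zero (hab : a < b) (hf : ContinuousOn f (Icc a b))
    (hmoments : ∀ n : ℕ, ∫ x in a..b, x ^ n * f x = 0) : EqOn f 0 (Icc a b) := by
  intro x hx
  by_contra hne
  have hpos : 0 < ∫ x in a..b, f x * f x := intervalIntegral.integral_pos hab (hf.mul hf)
    (fun _ _ => mul_self_nonneg _) ⟨x, hx, mul_self_pos.2 hne⟩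
  exact hpos.ne' (integral_mul_self_eq_zero_of_forall_integral_pow_mul_eq_zero hab.le hf hmoments)

end Moments

lemma continuousOn_mul_comp_neg_log {g : ℝ → ℝ} (hg : ContinuousOn g (Ici 0)) {M : ℝ}
    (hM : ∀ t, 0 ≤ t → |g t| ≤ M) : ContinuousOn (fun x => x * g (-log x)) (Icc 0 1) := by
  have hmaps : MapsTo (fun x => -log x) (Icc 0 1) (Ici 0) := fun x hx =>
    mem_Ici.2 (neg_nonneg.2 (log_nonpos hx.1 hx.2))
  intro x hx
  rcases hx.1.eq_or_lt with rfl | hpos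
  · rw [ContinuousWithinAt, zero_mul]
    refine Filter.Tendsto.zero_mul_isBoundedUnder_le (tendsto_id'.2 nhdsWithin_le_nhds)
      ⟨M, eventually_map.2 (eventually_mem_nhdsWithin.mono fun y hy => hM _ (hmaps hy))⟩
  · exact continuousWithinAt_id.mul (ContinuousWithinAt.comp (f := fun x => -log x)
      (hg _ (hmaps hx)) (continuousAt_log hpos.ne').neg.continuousWithinAt hmaps)

lemma integral_comp_exp_neg (f : ℝ → ℝ) :
    ∫ x in 0..1, f x = ∫ t in Ioi 0, exp (-t) * f (exp (-t)) := by
  have himage : (fun t => exp (-t)) '' Ioi 0 = Ioo 0 1 := by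
    ext x
    constructor
    · rintro ⟨t, ht, rfl⟩
      exact ⟨exp_pos _, exp_lt_one_iff.2 (neg_neg_of_pos ht)⟩
    · rintro ⟨hx0, hx1⟩
      exact ⟨-log x, neg_pos.2 (log_neg hx0 hx1), by simp [exp_log hx0]⟩
  have hderiv : ∀ t ∈ Ioi (0 : ℝ), HasDerivWithinAt (fun t => exp (-t)) (-exp (-t)) (Ioi 0) t :=
    fun t _ => by simpa using (hasDerivAt_neg t).exp.hasDerivWithinAt
  have hinj : InjOn (fun t : ℝ => exp (-t)) (Ioi 0) := fun t _ u _ h =>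
    neg_injective (exp_injective h)
  rw [intervalIntegral.integral_of_le zero_le_one, integral_Ioc_eq_integral_Ioo, ← himage,
    integral_image_eq_integral_abs_deriv_smul measurableSet_Ioi hderiv hinj]
  simp only [abs_neg, abs_exp, smul_eq_mul]

lemma eqOn_zero_of_integral_exp_neg_mul_eq_zero {f : ℝ → ℝ} (hf : ContinuousOn f (Ici 0))
    {M c : ℝ} (hM : ∀ t, 0 ≤ t → |f t| ≤ M * exp (c * t))
    (hlaplace : ∀ s > c, ∫ t in Ioi 0, exp (-(s * t)) * f t = 0) : EqOn f 0 (Ici 0) := by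
  set g : ℝ → ℝ := fun t => exp (-(c * t)) * f t with hg
  have hgcont : ContinuousOn g (Ici 0) := by fun_prop
  have hgM : ∀ t, 0 ≤ t → |g t| ≤ M := fun t ht => by
    rw [hg, abs_mul, abs_exp, exp_neg, inv_mul_le_iff₀ (exp_pos _), mul_comm]
    exact hM t ht
  have hmoments : ∀ n : ℕ, ∫ x in (0 : ℝ)..1, x ^ n * (x * g (-log x)) = 0 := fun n => by
    rw [integral_comp_exp_neg]
    refine Eq.trans ?_ (hlaplace (c + n + 2) (by linarith [(n.cast_nonneg : (0 : ℝ) ≤ n)]))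
    refine setIntegral_congr_fun measurableSet_Ioi fun t _ => ?_
    simp only [hg, log_exp, neg_neg, ← exp_nat_mul, ← mul_assoc, ← exp_add]
    ring_nf
  have hzero := eqOn_zero_of_forall_integral_pow_mul_eq_zero zero_lt_one
    (continuousOn_mul_comp_neg_log hgcont hgM) hmoments
  intro t ht
  have hmem : exp (-t) ∈ Icc (0 : ℝ) 1 := ⟨(exp_pos _).le, exp_le_one_iff.2 (neg_nonpos.2 ht)⟩
  simpa [hg] using hzero hmem

/-! ### The Mittag-Leffler function -/

section MittagLeffler

lemma rpow_mul_exp_neg_le_Gamma {x T : ℝ} (hx : 0 ≤ x) (hT : 0 ≤ T) :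
    T ^ x * exp (-T) ≤ Gamma (x + 1) := by
  have hGamma := GammaIntegral_convergent (s := x + 1) (by linarith)
  have hsub : Ioi T ⊆ Ioi 0 := Ioi_subset_Ioi hT
  have htail : IntegrableOn (fun t => exp (-t) * T ^ x) (Ioi T) :=
    (integrableOn_exp_neg_Ioi T).mul_const _
  calc T ^ x * exp (-T) = ∫ t in Ioi T, exp (-t) * T ^ x := by
        rw [integral_mul_const, integral_exp_neg_Ioi, mul_comm]
    _ ≤ ∫ t in Ioi T, exp (-t) * t ^ (x + 1 - 1) := by
        refine setIntegral_mono_on htail (hGamma.mono_set hsub) measurableSet_Ioi fun t ht => ?_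
        rw [add_sub_cancel_right]
        gcongr
        exact (mem_Ioi.1 ht).le
    _ ≤ ∫ t in Ioi 0, exp (-t) * t ^ (x + 1 - 1) := by
        refine setIntegral_mono_set hGamma ?_ hsub.eventuallyLE
        filter_upwards [ae_restrict_mem measurableSet_Ioi] with t ht
        have : 0 < t := ht
        positivity
    _ = Gamma (x + 1) := (Gamma_eq_integral (by linarith)).symm

variable {α : ℝ} (hα : 0 < α)
include hα

lemma Gamma_natCast_mul_add_one_pos (k : ℕ) : 0 < Gamma (k * α + 1) :=
  Gamma_pos_of_pos (by positivity)

lemma rpow_pow_div_Gamma_le {t : ℝ} (ht : 0 ≤ t) (k : ℕ) :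
    (t ^ α) ^ k / Gamma (k * α + 1) ≤ exp (2 * t) * ((2 : ℝ) ^ (-α)) ^ k := by
  rw [div_le_iff₀ (Gamma_natCast_mul_add_one_pos hα k)]
  calc (t ^ α) ^ k
      = exp (2 * t) * ((2 : ℝ) ^ (-α)) ^ k * ((2 * t) ^ (k * α) * exp (-(2 * t))) := by
        rw [mul_comm (k : ℝ), rpow_mul_natCast (by positivity), mul_rpow two_pos.le ht, mul_pow,
          rpow_neg two_pos.le, inv_pow, exp_neg]
        field_simp
    _ ≤ exp (2 * t) * ((2 : ℝ) ^ (-α)) ^ k * Gamma (k * α + 1) := by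
        gcongr
        exact rpow_mul_exp_neg_le_Gamma (by positivity) (by positivity)

lemma summable_pow_div_Gamma {r : ℝ} (hr : 0 ≤ r) :
    Summable fun k : ℕ => r ^ k / Gamma (k * α + 1) := by
  refine .of_nonneg_of_le
    (fun k => div_nonneg (by positivity) (Gamma_natCast_mul_add_one_pos hα k).le) (fun k => ?_)
    ((summable_geometric_of_lt_one (by positivity)
      (rpow_lt_one_of_one_lt_of_neg one_lt_two (neg_neg_of_pos hα))).mul_left
      (exp (2 * r ^ α⁻¹)))
  have h := rpow_pow_div_Gamma_le hα (rpow_nonneg hr α⁻¹) k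
  rwa [rpow_inv_rpow hr hα.ne'] at h

lemma norm_mittagLeffler_term (z : ℝ) (k : ℕ) :
    ‖z ^ k / Gamma (k * α + 1)‖ = |z| ^ k / Gamma (k * α + 1) := by
  rw [norm_div, norm_pow, norm_eq_abs, norm_of_nonneg (Gamma_natCast_mul_add_one_pos hα k).le]

lemma continuous_mittagLeffler : Continuous (mittagLeffler α) := by
  rw [continuous_iff_continuousAt]
  intro z
  have hball : ContinuousOn (mittagLeffler α) (Metric.ball 0 (|z| + 1)) := by
    refine continuousOn_tsum (fun k => by fun_prop)
      (summable_pow_div_Gamma hα (by positivity : 0 ≤ |z| + 1)) fun k y hy => ?_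
    rw [norm_mittagLeffler_term hα]
    have := (Gamma_natCast_mul_add_one_pos hα k).le
    gcongr
    exact (mem_ball_zero_iff.1 hy).le
  exact hball.continuousAt (Metric.isOpen_ball.mem_nhds (by simp))

lemma abs_mittagLeffler_neg_rpow_le {t : ℝ} (ht : 0 ≤ t) :
    |mittagLeffler α (-(t ^ α))| ≤ exp (2 * t) * (1 - (2 : ℝ) ^ (-α))⁻¹ := by
  rw [← norm_eq_abs]
  refine tsum_of_norm_bounded ((hasSum_geometric_of_lt_one (by positivity)
    (rpow_lt_one_of_one_lt_of_neg one_lt_two (neg_neg_of_pos hα))).mul_left _) fun k => ?_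
  rw [norm_mittagLeffler_term hα, abs_neg, abs_of_nonneg (by positivity)]
  exact rpow_pow_div_Gamma_le hα ht k

lemma integral_exp_neg_mul_rpow_pow_div_Gamma {s : ℝ} (hs : 0 < s) (k : ℕ) :
    ∫ t in Ioi 0, exp (-(s * t)) * ((t ^ α) ^ k / Gamma (k * α + 1)) = s⁻¹ * ((s ^ α)⁻¹) ^ k := by
  have hGamma := (Gamma_natCast_mul_add_one_pos hα k).ne'
  calc ∫ t in Ioi 0, exp (-(s * t)) * ((t ^ α) ^ k / Gamma (k * α + 1))
      = ∫ t in Ioi 0, (Gamma (k * α + 1))⁻¹ * (t ^ ((k * α + 1) - 1) * exp (-(s * t))) := by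
        refine setIntegral_congr_fun measurableSet_Ioi fun t ht => ?_
        have ht' : 0 ≤ t := (mem_Ioi.1 ht).le
        simp only [add_sub_cancel_right, mul_comm (k : ℝ), rpow_mul_natCast ht']
        ring
    _ = (1 / s) ^ (k * α + 1) := by
        rw [integral_const_mul, integral_rpow_mul_exp_neg_mul_Ioi (by positivity) hs, mul_comm,
          mul_assoc, mul_inv_cancel₀ hGamma, mul_one]
    _ = s⁻¹ * ((s ^ α)⁻¹) ^ k := by
        rw [one_div, rpow_add_one (by positivity), mul_comm (k : ℝ),
          rpow_mul_natCast (by positivity), inv_rpow hs.le, mul_comm]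

lemma integrableOn_exp_neg_mul_rpow_pow_div_Gamma {s : ℝ} (hs : 0 < s) (k : ℕ) :
    IntegrableOn (fun t => exp (-(s * t)) * ((t ^ α) ^ k / Gamma (k * α + 1))) (Ioi 0) := by
  refine .of_integral_ne_zero ?_
  rw [integral_exp_neg_mul_rpow_pow_div_Gamma hα hs]
  positivity

lemma integral_exp_neg_mul_mittagLeffler {s z : ℝ} (hs : 0 < s) (hz : |z| < s ^ α) :
    ∫ t in Ioi 0, exp (-(s * t)) * mittagLeffler α (z * t ^ α) = s ^ (α - 1) / (s ^ α - z) := by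
  have hsα : 0 < s ^ α := by positivity
  set g : ℕ → ℝ → ℝ := fun k t => exp (-(s * t)) * ((t ^ α) ^ k / Gamma (k * α + 1))
  have hg : ∀ k, ∫ t in Ioi 0, g k t = s⁻¹ * ((s ^ α)⁻¹) ^ k :=
    integral_exp_neg_mul_rpow_pow_div_Gamma hα hs
  have hnorm : ∀ k, ∫ t in Ioi 0, ‖z ^ k * g k t‖ = s⁻¹ * (|z| / s ^ α) ^ k := fun k => by
    have hg_nonneg : ∀ t ∈ Ioi (0 : ℝ), ‖z ^ k * g k t‖ = |z| ^ k * g k t := fun t ht => by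
      have ht' : 0 < t := ht
      have := Gamma_natCast_mul_add_one_pos hα k
      rw [norm_mul, norm_pow, norm_eq_abs, norm_of_nonneg (by positivity)]
    rw [setIntegral_congr_fun measurableSet_Ioi hg_nonneg, integral_const_mul, hg]
    ring
  have hsum := hasSum_integral_of_summable_integral_norm (F := fun k t => z ^ k * g k t)
    (fun k => (integrableOn_exp_neg_mul_rpow_pow_div_Gamma hα hs k).const_mul _)
    (((summable_geometric_of_lt_one (by positivity) ((div_lt_one hsα).2 hz)).mul_left s⁻¹).congr
      fun k => (hnorm k).symm)
  have hgeom := (hasSum_geometric_of_abs_lt_one (r := z / s ^ α) (by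
    rwa [abs_div, abs_of_pos hsα, div_lt_one hsα])).mul_left s⁻¹
  calc ∫ t in Ioi 0, exp (-(s * t)) * mittagLeffler α (z * t ^ α)
      = ∫ t in Ioi 0, ∑' k, z ^ k * g k t := by
        refine setIntegral_congr_fun measurableSet_Ioi fun t _ => ?_
        simp only [g, mittagLeffler, ← tsum_mul_left]
        refine tsum_congr fun k => ?_
        rw [mul_pow]
        ring
    _ = s⁻¹ * (1 - z / s ^ α)⁻¹ := hsum.unique (hgeom.congr_fun fun k => by
        rw [integral_const_mul, hg]
        ring)
    _ = s ^ (α - 1) / (s ^ α - z) := by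
        have hne : s ^ α - z ≠ 0 := by linarith [le_abs_self z]
        rw [rpow_sub_one hs.ne']
        field_simp

lemma laplaceTransform_eq_mittagLeffler {μ : Measure ℝ≥0} [IsFiniteMeasure μ]
    (hμ : ∀ s > 0, stieltjesTransform μ s = s ^ (α - 1) / (s ^ α + 1)) {t : ℝ} (ht : 0 ≤ t) :
    laplaceTransform μ t = mittagLeffler α (-(t ^ α)) := by
  have hrpow : Continuous fun t : ℝ => t ^ α := continuous_rpow_const hα.le
  have hML : Continuous fun t => mittagLeffler α (-(t ^ α)) :=
    (continuous_mittagLeffler hα).comp hrpow.neg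
  set C := (1 - (2 : ℝ) ^ (-α))⁻¹
  have hbound : ∀ t, 0 ≤ t → |laplaceTransform μ t - mittagLeffler α (-(t ^ α))|
      ≤ (μ.real univ + C) * exp (2 * t) := fun t ht => by
    have hL : |laplaceTransform μ t| ≤ μ.real univ * exp (2 * t) := by
      rw [abs_of_nonneg (laplaceTransform_nonneg μ t)]
      exact (laplaceTransform_le μ ht).trans
        (le_mul_of_one_le_right measureReal_nonneg (one_le_exp (by positivity)))
    linarith [abs_sub (laplaceTransform μ t) (mittagLeffler α (-(t ^ α))),
      abs_mittagLeffler_neg_rpow_le hα ht]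
  have hlaplace : ∀ s > 2, ∫ t in Ioi 0, exp (-(s * t)) *
      (laplaceTransform μ t - mittagLeffler α (-(t ^ α))) = 0 := fun s hs => by
    have hs0 : 0 < s := by linarith
    have hL := (integral_exp_neg_mul_mul_laplaceTransform μ hs0).trans (hμ s hs0)
    have hE : ∫ t in Ioi 0, exp (-(s * t)) * mittagLeffler α (-(t ^ α))
        = s ^ (α - 1) / (s ^ α + 1) := by
      simpa using integral_exp_neg_mul_mittagLeffler (z := -1) hα hs0
        (by simpa using one_lt_rpow (by linarith) hα)
    have hne : s ^ (α - 1) / (s ^ α + 1) ≠ 0 := by positivity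
    simp only [mul_sub]
    rw [integral_sub (.of_integral_ne_zero (hL ▸ hne)) (.of_integral_ne_zero (hE ▸ hne)), hL, hE,
      sub_self]
  exact sub_eq_zero.1 (eqOn_zero_of_integral_exp_neg_mul_eq_zero
    ((continuousOn_laplaceTransform μ).sub hML.continuousOn) hbound hlaplace ht)

end MittagLeffler

/-! ### Convolution quadrature -/

lemma cqWeight_zero (α : ℝ) : cqWeight α 0 = 1 := by
  simp [cqWeight]

lemma descPochhammer_smeval_eq_prod_range {R : Type*} [CommRing R] (r : R) (j : ℕ) :
    (descPochhammer ℤ j).smeval r = ∏ i ∈ Finset.range j, (r - i) := by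
  rw [← descPochhammer_eval_eq_prod_range, ← descPochhammer_map (Int.castRingHom R),
    Polynomial.eval_map, ← algebraMap_int_eq, ← Polynomial.aeval_def, Polynomial.aeval_eq_smeval]

lemma cqWeight_eq_choose (α : ℝ) (j : ℕ) : cqWeight α j = (-1) ^ j * Ring.choose α j := by
  rw [cqWeight, Ring.choose_eq_smul, descPochhammer_smeval_eq_prod_range, smul_eq_mul]
  ring

lemma hasSum_cqWeight_mul_pow (α : ℝ) {ξ : ℝ} (hξ : |ξ| < 1) :
    HasSum (fun j => cqWeight α j * ξ ^ j) ((1 - ξ) ^ α) := by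
  have hbinom := (one_add_rpow_hasFPowerSeriesOnBall_zero (a := α)).hasSum (y := -ξ)
    (by simpa [← ofReal_norm] using hξ)
  rw [zero_add, ← sub_eq_add_neg] at hbinom
  refine hbinom.congr_fun fun j => ?_
  rw [binomialSeries_apply, List.ofFn_const, List.prod_replicate, cqWeight_eq_choose, neg_pow ξ,
    smul_eq_mul]
  ring

lemma eq_zero_of_hasSum_mul_pow_eq_const {r : ℕ → ℝ} {c : ℝ}
    (hr : ∀ ξ : ℝ, |ξ| < 1 → HasSum (fun n => r n * ξ ^ n) c) {n : ℕ} (hn : n ≠ 0) : r n = 0 := by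
  have hseries : HasFPowerSeriesAt (fun _ : ℝ => c) (FormalMultilinearSeries.ofScalars ℝ r) 0 := by
    rw [hasFPowerSeriesAt_iff]
    filter_upwards [Metric.ball_mem_nhds (0 : ℝ) one_pos] with ξ hξ
    simpa [FormalMultilinearSeries.coeff_ofScalars, mul_comm] using hr ξ (by simpa using hξ)
  have heq := hseries.eq_formalMultilinearSeries hasFPowerSeriesAt_const
  rw [← FormalMultilinearSeries.coeff_ofScalars (𝕜 := ℝ) (p := r), heq,
    FormalMultilinearSeries.coeff, constFormalMultilinearSeries_apply_of_nonzero hn]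
  rfl

lemma hasSum_mul_pow_eulerTransform {α κ ξ : ℝ} {μ : Measure ℝ≥0} [IsFiniteMeasure μ]
    (hμ : ∀ s > 0, stieltjesTransform μ s = s ^ (α - 1) / (s ^ α + 1)) (hκ : 0 < κ)
    (hξ : |ξ| < 1) :
    HasSum (fun n => eulerTransform μ κ n * ξ ^ n)
      (μ.real univ + ξ * ((1 - ξ) ^ (α - 1) / ((1 - ξ) ^ α + κ ^ α))) := by
  have hpos : 0 < 1 - ξ := sub_pos.2 (lt_of_abs_lt hξ)
  have htail := (hasSum_pow_mul_eulerTransform μ hκ hξ).mul_left ξ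
  have hval : κ⁻¹ * stieltjesTransform μ ((1 - ξ) / κ)
      = (1 - ξ) ^ (α - 1) / ((1 - ξ) ^ α + κ ^ α) := by
    rw [hμ _ (by positivity), div_rpow hpos.le hκ.le, div_rpow hpos.le hκ.le, rpow_sub_one hκ.ne']
    field_simp
  rw [hval] at htail
  refine (hasSum_nat_add_iff' 1).1 ?_
  simp only [Finset.sum_range_one, pow_zero, mul_one, eulerTransform_zero, add_sub_cancel_left]
  exact htail.congr_fun fun n => by ring

lemma sum_cqWeight_mul_eulerTransform_sub_one {α κ : ℝ} {μ : Measure ℝ≥0} [IsProbabilityMeasure μ]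
    (hμ : ∀ s > 0, stieltjesTransform μ s = s ^ (α - 1) / (s ^ α + 1)) (hκ : 0 < κ) {n : ℕ}
    (hn : n ≠ 0) :
    ∑ j ∈ Finset.range (n + 1), cqWeight α j * (eulerTransform μ κ (n - j) - 1)
      + κ ^ α * eulerTransform μ κ n = 0 := by
  refine eq_zero_of_hasSum_mul_pow_eq_const (c := κ ^ α) (r := fun n =>
    ∑ j ∈ Finset.range (n + 1), cqWeight α j * (eulerTransform μ κ (n - j) - 1)
      + κ ^ α * eulerTransform μ κ n) (fun ξ hξ => ?_) hn
  have hpos : 0 < 1 - ξ := sub_pos.2 (lt_of_abs_lt hξ)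
  have hw := hasSum_cqWeight_mul_pow α hξ
  have hA := hasSum_mul_pow_eulerTransform hμ hκ hξ
  have hA1 := hA.sub (hasSum_geometric_of_abs_lt_one hξ)
  have hconv := hasSum_sum_range_mul_of_summable_norm hw.summable.norm hA1.summable.norm
  rw [hw.tsum_eq, hA1.tsum_eq] at hconv
  convert! hconv.add (hA.mul_left (κ ^ α)) using 1
  · funext n
    rw [add_mul, Finset.sum_mul, mul_assoc]
    congr 1
    refine Finset.sum_congr rfl fun j hj => ?_
    rw [← pow_mul_pow_sub ξ (Finset.mem_range_succ_iff.1 hj)]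
    ring
  · rw [probReal_univ, rpow_sub_one hpos.ne']
    field_simp
    ring

lemma eq_of_sum_range_mul_sub_add_mul_eq_zero {R : Type*} [CommRing R] [NoZeroDivisors R]
    {w F G : ℕ → R} {c q : R} (hw : w 0 + q ≠ 0) (h0 : F 0 = G 0)
    (hF : ∀ n ≠ 0, ∑ j ∈ Finset.range (n + 1), w j * (F (n - j) - c) + q * F n = 0)
    (hG : ∀ n ≠ 0, ∑ j ∈ Finset.range (n + 1), w j * (G (n - j) - c) + q * G n = 0) : F = G := by
  funext n
  induction n using Nat.strong_induction_on with
  | _ n ih =>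
    rcases eq_or_ne n 0 with rfl | hn
    · exact h0
    have hlower : ∑ j ∈ Finset.range n, w (j + 1) * (F (n - (j + 1)) - c)
        = ∑ j ∈ Finset.range n, w (j + 1) * (G (n - (j + 1)) - c) :=
      Finset.sum_congr rfl fun j _ => by rw [ih _ (by lia)]
    have hFn := hF n hn
    have hGn := hG n hn
    rw [Finset.sum_range_succ', Nat.sub_zero] at hFn hGn
    refine sub_eq_zero.1 ((mul_eq_zero.1 ?_).resolve_left hw)
    linear_combination hFn - hGn - hlower

lemma isProbabilityMeasure_of_stieltjesTransform_eq {α : ℝ} (hα : 0 < α) {μ : Measure ℝ≥0}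
    [IsFiniteMeasure μ] (hμ : ∀ s > 0, stieltjesTransform μ s = s ^ (α - 1) / (s ^ α + 1)) :
    IsProbabilityMeasure μ := by
  rw [isProbabilityMeasure_iff_real, ← laplaceTransform_zero,
    laplaceTransform_eq_mittagLeffler hα hμ le_rfl, zero_rpow hα.ne', neg_zero, mittagLeffler,
    tsum_eq_single 0 fun k hk => by rw [zero_pow hk, zero_div]]
  simp

lemma abs_mittagLeffler_sub_eulerTransform_le {α κ : ℝ} (hα : 0 < α) {μ : Measure ℝ≥0}
    [IsFiniteMeasure μ] (hμ : ∀ s > 0, stieltjesTransform μ s = s ^ (α - 1) / (s ^ α + 1))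
    (hκ : 0 < κ) {n : ℕ} (hn : n ≠ 0) :
    |mittagLeffler α (-((κ * n) ^ α)) - eulerTransform μ κ n|
      ≤ 27 / (1 + (κ * n) ^ α) * (n : ℝ)⁻¹ := by
  have ht : 0 < κ * n := by positivity
  rw [← laplaceTransform_eq_mittagLeffler hα hμ ht.le]
  refine (abs_laplaceTransform_sub_eulerTransform_le μ hκ hn).trans_eq ?_
  rw [hμ _ (by positivity), one_div, inv_rpow ht.le, inv_rpow ht.le, rpow_sub_one ht.ne']
  field_simp

theorem cq_ml_error_bound_general {α τ lam : ℝ} (hα : α ∈ Ioc (0 : ℝ) 1) (hτ : 0 < τ)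
    (hlam : 0 < lam) {F : ℕ → ℝ} (hF0 : F 0 = 1)
    (hF : ∀ n : ℕ, 1 ≤ n →
      τ ^ (-α) * ∑ j ∈ Finset.range (n + 1), cqWeight α j * (F (n - j) - 1) + lam * F n = 0)
    {n : ℕ} (hn : 1 ≤ n) :
    |mittagLeffler α (-(lam * ((n : ℝ) * τ) ^ α)) - F n|
      ≤ 27 / (1 + lam * ((n : ℝ) * τ) ^ α) * (n : ℝ)⁻¹ := by
  obtain ⟨μ, _, hμ⟩ := exists_stieltjesTransform_eq hα
  have := isProbabilityMeasure_of_stieltjesTransform_eq hα.1 hμ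
  set κ := lam ^ α⁻¹ * τ
  have hκ : 0 < κ := by positivity
  have hlamα : (lam ^ α⁻¹) ^ α = lam := rpow_inv_rpow hlam.le hα.1.ne'
  have hκα : κ ^ α = lam * τ ^ α := by rw [mul_rpow (by positivity) hτ.le, hlamα]
  have hκn : (κ * n) ^ α = lam * (n * τ) ^ α := by
    rw [mul_rpow hκ.le n.cast_nonneg, hκα, mul_rpow n.cast_nonneg hτ.le]
    ring
  have hscheme : F = eulerTransform μ κ := by
    refine eq_of_sum_range_mul_sub_add_mul_eq_zero (w := cqWeight α) (c := 1) (q := κ ^ α)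
      (by rw [cqWeight_zero]; positivity) (by rw [hF0, eulerTransform_zero, probReal_univ])
      (fun m hm => ?_) fun m hm => sum_cqWeight_mul_eulerTransform_sub_one hμ hκ hm
    have hτα : τ ^ α * τ ^ (-α) = 1 := by rw [← rpow_add hτ, add_neg_cancel, rpow_zero]
    rw [hκα]
    linear_combination τ ^ α * hF m (Nat.one_le_iff_ne_zero.2 hm) -
      (∑ j ∈ Finset.range (m + 1), cqWeight α j * (F (m - j) - 1)) * hτα
  rw [← hκn, hscheme]
  exact abs_mittagLeffler_sub_eulerTransform_le hα.1 hμ hκ (by lia)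

end

/-- λ-dependent error bound for the backward Euler CQ approximation `F_τ^n(λ)`
(characterized by the discrete scheme `∂̄_τ^α(F^n − 1) + λ F^n = 0`, `F^0 = 1`) of the
Mittag-Leffler function: `|E_{α,1}(-λ t_n^α) − F_τ^n(λ)| ≤ c n⁻¹/(1 + λ t_n^α)`. -/
theorem cq_ml_error_bound (α : ℝ) (hα : α ∈ Set.Ioo (0 : ℝ) 1) :
    ∃ c : ℝ, 0 < c ∧
      ∀ τ lam : ℝ, 0 < τ → 0 < lam → ∀ F : ℕ → ℝ, F 0 = 1 →
        (∀ n : ℕ, 1 ≤ n →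
          τ ^ (-α) * ∑ j ∈ Finset.range (n + 1), cqWeight α j * (F (n - j) - 1)
            + lam * F n = 0) →
        ∀ n : ℕ, 1 ≤ n →
          |mittagLeffler α (-(lam * ((n : ℝ) * τ) ^ α)) - F n|
            ≤ c / (1 + lam * ((n : ℝ) * τ) ^ α) * (n : ℝ)⁻¹ := by
  refine ⟨27, by norm_num, fun τ lam hτ hlam F hF0 hF n hn => ?_⟩
  exact cq_ml_error_bound_general ⟨hα.1, hα.2.le⟩ hτ hlam hF0 hF hn
end
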